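/- arXiv:math/9505205 — 5 statements merged into one kernel-verified Lean document; each statement's English description precedes it below -/
import Mathlib

section
/- Let m ≥ 3 and let σ, ρ_1, …, ρ_m : [0,1] → (0,∞) be continuously differentiable functions, with the subscripts of the ρ_i taken cyclically in {1,…,m} (so ρ_{m+1} := ρ_1 and ρ_0 in a subscript i−1 with i=1 means ρ_m). Define the angle sum Θ(t) = Σ_{i=1}^{m} arccos( 1 − 2ρ_i(t)ρ_{i+1}(t) / ((σ(t)+ρ_i(t))(σ(t)+ρ_{i+1}(t))) ). If Θ is nondecreasing on [0,1], then for every t ∈ [0,1] one has 0 ≤ Σ_{i=1}^{m} (1/(σ(t)+ρ_i(t))) · [ √( σ(t)ρ_i(t)ρ_{i−1}(t) / (σ(t)+ρ_i(t)+ρ_{i−1}(t)) ) + √( σ(t)ρ_i(t)ρ_{i+1}(t) / (σ(t)+ρ_i(t)+ρ_{i+1}(t)) ) ] · ( ρ_i′(t)/ρ_i(t) − σ′(t)/σ(t) ). -/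
open Real Set

lemma angle_hasDerivAt (a b c : ℝ → ℝ) (a' b' c' t : ℝ)
    (ha : 0 < a t) (hb : 0 < b t) (hc : 0 < c t)
    (da : HasDerivAt a a' t) (db : HasDerivAt b b' t) (dc : HasDerivAt c c' t) :
    HasDerivAt (fun t => Real.arccos (1 - 2 * b t * c t / ((a t + b t) * (a t + c t))))
      (Real.sqrt (a t * b t * c t / (a t + b t + c t)) *
        ((1 / (a t + b t)) * (b' / b t - a' / a t) +
         (1 / (a t + c t)) * (c' / c t - a' / a t))) t := by
  have hq : HasDerivAt (fun t => 1 - 2 * b t * c t / ((a t + b t) * (a t + c t))) _ t :=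
    (((db.const_mul 2).mul dc).div ((da.add db).mul (da.add dc))
      (by simp only [Pi.mul_apply, Pi.add_apply]; positivity)).const_sub 1
  have hlt : 1 - 2 * b t * c t / ((a t + b t) * (a t + c t)) < 1 := by
    have : 0 < 2 * b t * c t / ((a t + b t) * (a t + c t)) := by positivity
    linarith
  have hgt : -1 < 1 - 2 * b t * c t / ((a t + b t) * (a t + c t)) := by
    have : 2 * b t * c t / ((a t + b t) * (a t + c t)) < 2 := by
      rw [div_lt_iff₀ (by positivity)]
      nlinarith [mul_pos ha ha, mul_pos ha hb, mul_pos ha hc]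
    linarith
  have hd := (Real.hasDerivAt_arccos hgt.ne' hlt.ne).comp t hq
  refine hd.congr_deriv ?_
  simp only [Pi.mul_apply, Pi.add_apply]
  generalize a t = A at *
  generalize b t = B at *
  generalize c t = C at *
  have hR : 0 < Real.sqrt (A * B * C / (A + B + C)) := Real.sqrt_pos.mpr (by positivity)
  have hR2 : Real.sqrt (A * B * C / (A + B + C)) ^ 2 = A * B * C / (A + B + C) :=
    Real.sq_sqrt (by positivity)
  generalize Real.sqrt (A * B * C / (A + B + C)) = R at *
  have hs : Real.sqrt (1 - (1 - 2 * B * C / ((A + B) * (A + C))) ^ 2)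
      = 2 * (A + B + C) * R / ((A + B) * (A + C)) := by
    rw [← Real.sqrt_sq (show 0 ≤ 2 * (A + B + C) * R / ((A + B) * (A + C)) by positivity)]
    congr 1
    rw [div_pow, mul_pow, hR2]
    field_simp
    ring
  rw [hs]
  have hR3 : R ^ 2 * (A + B + C) = A * B * C := by
    rw [hR2]; field_simp
  have key : B * C / ((A + B + C) * R) = R / A := by
    rw [div_eq_div_iff (by positivity) (by positivity)]
    linarith
  trans (B * C / ((A + B + C) * R)) * A *
      ((1 / (A + B)) * (b' / B - a' / A) + (1 / (A + C)) * (c' / C - a' / A))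
  · field_simp
    ring
  · rw [key]
    field_simp

lemma sum_shift (m : ℕ) (g : ℤ → ℝ) (hg : ∀ i, g (i + m) = g i) :
    ∑ i ∈ Finset.Icc (1:ℤ) m, g (i + 1) = ∑ i ∈ Finset.Icc (1:ℤ) m, g i := by
  have conv : ∀ f : ℤ → ℝ, ∑ i ∈ Finset.Icc (1:ℤ) m, f i =
      ∑ k ∈ Finset.range m, f ((k:ℤ) + 1) := by
    intro f
    symm
    refine Finset.sum_bij (fun k _ => (k:ℤ) + 1) ?_ ?_ ?_ ?_
    · intro k hk
      simp only [Finset.mem_range, Finset.mem_Icc] at *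
      omega
    · intro k _ l _ h
      omega
    · intro i hi
      simp only [Finset.mem_range, Finset.mem_Icc] at *
      exact ⟨(i - 1).toNat, by omega, by omega⟩
    · intros; rfl
  rw [conv, conv]
  have h1 := Finset.sum_range_succ (fun k : ℕ => g ((k:ℤ) + 1)) m
  have h2 := Finset.sum_range_succ' (fun k : ℕ => g ((k:ℤ) + 1)) m
  have h3 := hg 1
  rw [add_comm (1:ℤ)] at h3
  push_cast at h1 h2
  linarith

/-- Lemma 3.6: if the angle sum at the center of a star (center label `σ`,
boundary labels `ρ 1, …, ρ m` taken cyclically, all C¹ in `t ∈ [0,1]`) is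
nondecreasing, then the stated sum is nonnegative for every `t ∈ [0,1]`. -/
theorem star_angle_sum_monotone_ineq
    (m : ℕ) (hm : 3 ≤ m)
    (σ σ' : ℝ → ℝ) (ρ ρ' : ℤ → ℝ → ℝ)
    (hper : ∀ i : ℤ, ρ (i + m) = ρ i)
    (hσpos : ∀ t ∈ Icc (0:ℝ) 1, 0 < σ t)
    (hρpos : ∀ i : ℤ, ∀ t ∈ Icc (0:ℝ) 1, 0 < ρ i t)
    (hσderiv : ∀ t ∈ Icc (0:ℝ) 1, HasDerivAt σ (σ' t) t)
    (hσcont : ContinuousOn σ' (Icc (0:ℝ) 1))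
    (hρderiv : ∀ i : ℤ, ∀ t ∈ Icc (0:ℝ) 1, HasDerivAt (ρ i) (ρ' i t) t)
    (hρcont : ∀ i : ℤ, ContinuousOn (ρ' i) (Icc (0:ℝ) 1))
    (Θ : ℝ → ℝ)
    (hΘ : ∀ t, Θ t = ∑ i ∈ Finset.Icc (1:ℤ) m,
      Real.arccos (1 - 2 * ρ i t * ρ (i+1) t /
        ((σ t + ρ i t) * (σ t + ρ (i+1) t))))
    (hmono : MonotoneOn Θ (Icc (0:ℝ) 1)) :
    ∀ t ∈ Icc (0:ℝ) 1,
      0 ≤ ∑ i ∈ Finset.Icc (1:ℤ) m,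
        (1 / (σ t + ρ i t)) *
          (Real.sqrt (σ t * ρ i t * ρ (i-1) t / (σ t + ρ i t + ρ (i-1) t)) +
           Real.sqrt (σ t * ρ i t * ρ (i+1) t / (σ t + ρ i t + ρ (i+1) t))) *
          (ρ' i t / ρ i t - σ' t / σ t) := by
  intro t ht
  have hper' : ∀ i : ℤ, ρ' (i + m) t = ρ' i t := by
    intro i
    have h1 := hρderiv (i + m) t ht
    rw [hper] at h1
    exact h1.unique (hρderiv i t ht)
  have hd : HasDerivAt Θ (∑ i ∈ Finset.Icc (1:ℤ) m,
      Real.sqrt (σ t * ρ i t * ρ (i+1) t / (σ t + ρ i t + ρ (i+1) t)) *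
        ((1 / (σ t + ρ i t)) * (ρ' i t / ρ i t - σ' t / σ t) +
         (1 / (σ t + ρ (i+1) t)) * (ρ' (i+1) t / ρ (i+1) t - σ' t / σ t))) t := by
    rw [funext hΘ]
    exact HasDerivAt.fun_sum fun i _ => angle_hasDerivAt σ (ρ i) (ρ (i+1)) _ _ _ t
      (hσpos t ht) (hρpos i t ht) (hρpos (i+1) t ht) (hσderiv t ht)
      (hρderiv i t ht) (hρderiv (i+1) t ht)
  have hnn : 0 ≤ derivWithin Θ (Icc (0:ℝ) 1) t := hmono.derivWithin_nonneg
  rw [hd.hasDerivWithinAt.derivWithin (uniqueDiffOn_Icc zero_lt_one t ht)] at hnn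
  refine hnn.trans_eq ?_
  have hs := sum_shift m (fun i => Real.sqrt (σ t * ρ i t * ρ (i-1) t / (σ t + ρ i t + ρ (i-1) t))
      * ((1 / (σ t + ρ i t)) * (ρ' i t / ρ i t - σ' t / σ t))) (by
    intro i
    have e : i + (m:ℤ) - 1 = (i - 1) + m := by ring
    simp only [e, hper, hper'])
  simp only [mul_add, add_mul, Finset.sum_add_distrib]
  rw [add_comm]
  congr 1
  · refine Eq.trans ?_ (hs.trans ?_)
    · refine Finset.sum_congr rfl fun i _ => ?_
      simp only [add_sub_cancel_right]
      rw [mul_right_comm (σ t), add_right_comm (σ t)]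
    · exact Finset.sum_congr rfl fun i _ => by ring
  · exact Finset.sum_congr rfl fun i _ => by ring
end

section
/- Let σ, ρ_1, ρ_2 : [0,1] → (0,∞) be differentiable functions and define α(t) = arccos( 1 − 2ρ_1(t)ρ_2(t) / ((σ(t)+ρ_1(t))(σ(t)+ρ_2(t))) ). Then α is differentiable on [0,1] and for every t, α′(t) = √( σ(t)ρ_1(t)ρ_2(t) / (σ(t)+ρ_1(t)+ρ_2(t)) ) · [ (1/(σ(t)+ρ_1(t)))·( ρ_1′(t)/ρ_1(t) − σ′(t)/σ(t) ) + (1/(σ(t)+ρ_2(t)))·( ρ_2′(t)/ρ_2(t) − σ′(t)/σ(t) ) ]. -/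
open Real Set

/-- Single-face derivative computation: the angle `α` at the center of the
circle of radius `σ t` in the triangle of centers of three mutually
externally tangent circles of radii `σ t`, `ρ₁ t`, `ρ₂ t` is differentiable
in `t` with the stated derivative. -/
theorem face_angle_hasDerivAt
    (σ σ' ρ₁ ρ₁' ρ₂ ρ₂' : ℝ → ℝ)
    (hσpos : ∀ t ∈ Icc (0:ℝ) 1, 0 < σ t)
    (hρ₁pos : ∀ t ∈ Icc (0:ℝ) 1, 0 < ρ₁ t)
    (hρ₂pos : ∀ t ∈ Icc (0:ℝ) 1, 0 < ρ₂ t)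
    (hσderiv : ∀ t ∈ Icc (0:ℝ) 1, HasDerivAt σ (σ' t) t)
    (hρ₁deriv : ∀ t ∈ Icc (0:ℝ) 1, HasDerivAt ρ₁ (ρ₁' t) t)
    (hρ₂deriv : ∀ t ∈ Icc (0:ℝ) 1, HasDerivAt ρ₂ (ρ₂' t) t)
    (α : ℝ → ℝ)
    (hα : ∀ t, α t = Real.arccos
      (1 - 2 * ρ₁ t * ρ₂ t / ((σ t + ρ₁ t) * (σ t + ρ₂ t)))) :
    ∀ t ∈ Icc (0:ℝ) 1,
      HasDerivAt α
        (Real.sqrt (σ t * ρ₁ t * ρ₂ t / (σ t + ρ₁ t + ρ₂ t)) *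
          ((1 / (σ t + ρ₁ t)) * (ρ₁' t / ρ₁ t - σ' t / σ t) +
           (1 / (σ t + ρ₂ t)) * (ρ₂' t / ρ₂ t - σ' t / σ t))) t := by
  intro t ht
  have hs := hσpos t ht
  have ha := hρ₁pos t ht
  have hb := hρ₂pos t ht
  have ds := hσderiv t ht
  have da := hρ₁deriv t ht
  have db := hρ₂deriv t ht
  have hfun : α = fun t => Real.arccos
      (1 - 2 * ρ₁ t * ρ₂ t / ((σ t + ρ₁ t) * (σ t + ρ₂ t))) := funext hα
  rw [hfun]
  have hD : 0 < (σ t + ρ₁ t) * (σ t + ρ₂ t) := by positivity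
  have hinner := ((((da.const_mul 2).mul db).div ((ds.add da).mul (ds.add db)) hD.ne').const_sub 1)
  have hu : 0 < 2 * ρ₁ t * ρ₂ t / ((σ t + ρ₁ t) * (σ t + ρ₂ t)) := by positivity
  have hu2 : 2 * ρ₁ t * ρ₂ t / ((σ t + ρ₁ t) * (σ t + ρ₂ t)) < 2 := by
    rw [div_lt_iff₀ hD]
    nlinarith [mul_pos hs ha, mul_pos hs hb, mul_pos hs hs]
  have hS : 0 < σ t + ρ₁ t + ρ₂ t := by positivity
  have hsqrt : √(1 - (1 - 2 * ρ₁ t * ρ₂ t / ((σ t + ρ₁ t) * (σ t + ρ₂ t))) ^ 2) =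
      2 * (σ t + ρ₁ t + ρ₂ t) * √(σ t * ρ₁ t * ρ₂ t / (σ t + ρ₁ t + ρ₂ t)) /
        ((σ t + ρ₁ t) * (σ t + ρ₂ t)) := by
    rw [Real.sqrt_eq_iff_mul_self_eq_of_pos (by positivity)]
    have hR := Real.mul_self_sqrt
      (show 0 ≤ σ t * ρ₁ t * ρ₂ t / (σ t + ρ₁ t + ρ₂ t) by positivity)
    generalize √(σ t * ρ₁ t * ρ₂ t / (σ t + ρ₁ t + ρ₂ t)) = R at *
    rw [eq_div_iff hS.ne'] at hR
    field_simp
    linear_combination 4 * (σ t + ρ₁ t + ρ₂ t) * hR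
  have hmain := (Real.hasDerivAt_arccos
    (by simp only [Pi.mul_apply, Pi.add_apply, Pi.div_apply]; linarith)
    (by simp only [Pi.mul_apply, Pi.add_apply, Pi.div_apply]; linarith)).comp t hinner
  refine hmain.congr_deriv ?_
  simp only [Pi.mul_apply, Pi.add_apply, Pi.div_apply]
  rw [hsqrt]
  have hRpos : 0 < √(σ t * ρ₁ t * ρ₂ t / (σ t + ρ₁ t + ρ₂ t)) := by positivity
  have hR := Real.mul_self_sqrt
    (show 0 ≤ σ t * ρ₁ t * ρ₂ t / (σ t + ρ₁ t + ρ₂ t) by positivity)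
  generalize √(σ t * ρ₁ t * ρ₂ t / (σ t + ρ₁ t + ρ₂ t)) = R at *
  rw [eq_div_iff hS.ne'] at hR
  have hR' : R = σ t * ρ₁ t * ρ₂ t / ((σ t + ρ₁ t + ρ₂ t) * R) := by
    field_simp
    linear_combination hR
  conv_rhs => rw [hR']
  field_simp
  ring
end

section
/- Let L = { a + b·ω : a, b ∈ ℤ } ⊂ ℂ with ω = exp(iπ/3) be the triangular lattice, so that each v ∈ L has the six neighbors v + ω^k, k = 0,…,5, in cyclic order. For ρ : L → (0,∞) define the angle sum Θ_ρ(v) = Σ_{k=0}^{5} arccos( 1 − 2ρ(v+ω^k)ρ(v+ω^{k+1}) / ((ρ(v)+ρ(v+ω^k))(ρ(v)+ρ(v+ω^{k+1}))) ), indices k taken mod 6. Suppose ρ, ρ̃ : L → (0,∞) satisfy Θ_{ρ̃}(v) ≥ Θ_ρ(v) for every v ∈ L. Then the function A(v) = ρ̃(v)/ρ(v) is bounded above if and only if it is constant. -/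
open Real Set

/-- `ω = exp(iπ/3)`, a primitive sixth root of unity. -/
noncomputable def hexω : ℂ := Complex.exp ((Real.pi / 3 : ℂ) * Complex.I)

/-- The triangular lattice `L = {a + b·ω : a, b ∈ ℤ} ⊂ ℂ`. -/
def hexLattice : Set ℂ := {z | ∃ a b : ℤ, z = (a : ℂ) + (b : ℂ) * hexω}

/-- The angle sum of the label `ρ` at a vertex `v` of the triangular lattice:
the neighbors of `v` are `v + ω^k`, `k = 0, …, 5`, in cyclic order. -/
noncomputable def hexAngleSum (ρ : ℂ → ℝ) (v : ℂ) : ℝ :=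
  ∑ k ∈ Finset.range 6,
    Real.arccos (1 - 2 * ρ (v + hexω ^ k) * ρ (v + hexω ^ (k + 1)) /
      ((ρ v + ρ (v + hexω ^ k)) * (ρ v + ρ (v + hexω ^ (k + 1)))))


/-- The angle at the centre of the circle of radius `a`. -/
noncomputable def hexAng (a b c : ℝ) : ℝ := Real.arccos (1 - 2 * b * c / ((a + b) * (a + c)))

/-- Inradius over edge length. -/
noncomputable def hexKap (a b c : ℝ) : ℝ := √(a * b * c / (a + b + c)) / (a + b)

lemma hexKap_pos {a b c : ℝ} (ha : 0 < a) (hb : 0 < b) (hc : 0 < c) : 0 < hexKap a b c := by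
  unfold hexKap; positivity

lemma hexKap_symm (a b c : ℝ) : hexKap a b c = hexKap b a c := by
  unfold hexKap; rw [mul_comm a b, add_comm a b]

lemma hexKap_le {a b c : ℝ} (ha : 0 < a) (hb : 0 < b) (hc : 0 < c) : hexKap a b c ≤ 1 / 2 := by
  unfold hexKap
  rw [div_le_iff₀ (by positivity)]
  apply Real.sqrt_le_iff.2 ⟨by positivity, ?_⟩
  rw [div_le_iff₀ (by positivity)]
  nlinarith [mul_nonneg hc.le (sq_nonneg (a - b)), pow_pos (add_pos ha hb) 3]

lemma hexAng_hasDerivAt {a b c f g h : ℝ} (ha : 0 < a) (hb : 0 < b) (hc : 0 < c) (A B C : ℝ → ℝ) (t : ℝ)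
    (hA : HasDerivAt A (a * f) t) (hB : HasDerivAt B (b * g) t) (hC : HasDerivAt C (c * h) t)
    (hAt : A t = a) (hBt : B t = b) (hCt : C t = c) :
    HasDerivAt (fun t => hexAng (A t) (B t) (C t))
      (hexKap a b c * (g - f) + hexKap a c b * (h - f)) t := by
  unfold hexAng
  have hs : √(1 - (1 - 2 * b * c / ((a + b) * (a + c))) ^ 2)
      = 2 * √(a * b * c / (a + b + c)) * (a + b + c) / ((a + b) * (a + c)) := by
    rw [Real.sqrt_eq_iff_mul_self_eq_of_pos (by positivity), ← sq]
    rw [div_pow, mul_pow, mul_pow, Real.sq_sqrt (by positivity)]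
    field_simp
    ring
  have hsp : 0 < √(a * b * c / (a + b + c)) := by positivity
  have hss : √(a * b * c / (a + b + c)) ^ 2 = (a * b * c / (a + b + c)) := Real.sq_sqrt (by positivity)
  have h1 : 1 - 2 * b * c / ((a + b) * (a + c)) ≠ -1 := by
    have : 2 * b * c / ((a + b) * (a + c)) < 2 := by
      rw [div_lt_iff₀ (by positivity)]; nlinarith [mul_pos ha hb, mul_pos ha hc, mul_pos ha ha]
    linarith
  have h2 : 1 - 2 * b * c / ((a + b) * (a + c)) ≠ 1 := by
    have : 0 < 2 * b * c / ((a + b) * (a + c)) := by positivity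
    linarith
  have hin : HasDerivAt (fun t => 1 - 2 * B t * C t / ((A t + B t) * (A t + C t))) _ t :=
    (((hB.const_mul 2).mul hC).div ((hA.add hB).mul (hA.add hC))
      (by simp only [Pi.add_apply, Pi.mul_apply, hAt, hBt, hCt]; positivity)).const_sub 1
  have hh := (Real.hasDerivAt_arccos (x := 1 - 2 * B t * C t / ((A t + B t) * (A t + C t)))
    (by rw [hAt, hBt, hCt]; exact h1) (by rw [hAt, hBt, hCt]; exact h2)).comp t hin
  refine hh.congr_deriv ?_
  symm
  simp only [Pi.add_apply, Pi.mul_apply, hAt, hBt, hCt, hs]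
  unfold hexKap
  rw [show a + c + b = a + b + c by ring, show a * c * b = a * b * c by ring]
  generalize √(a * b * c / (a + b + c)) = s at *
  field_simp at hss ⊢
  linear_combination ((g - f) * (a + c) + (a + b) * (h - f)) * hss

/-- Averaged conductance. -/
noncomputable def hexK (a b c f g h : ℝ) : ℝ :=
  ∫ t in (0:ℝ)..1, hexKap (a * exp (t * f)) (b * exp (t * g)) (c * exp (t * h))

lemma hexKap_cont {a b c : ℝ} (f g h : ℝ) (ha : 0 < a) (hb : 0 < b) (hc : 0 < c) :
    Continuous fun t : ℝ => hexKap (a * exp (t * f)) (b * exp (t * g)) (c * exp (t * h)) := by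
  unfold hexKap
  refine Continuous.div (Continuous.sqrt (Continuous.div (by fun_prop) (by fun_prop) ?_)) (by fun_prop) ?_
  all_goals intro t; positivity

lemma hexK_pos {a b c : ℝ} (f g h : ℝ) (ha : 0 < a) (hb : 0 < b) (hc : 0 < c) :
    0 < hexK a b c f g h := by
  unfold hexK
  apply intervalIntegral.intervalIntegral_pos_of_pos
  · exact (hexKap_cont f g h ha hb hc).intervalIntegrable _ _
  · intro t; exact hexKap_pos (by positivity) (by positivity) (by positivity)
  · norm_num

lemma hexK_le {a b c : ℝ} (f g h : ℝ) (ha : 0 < a) (hb : 0 < b) (hc : 0 < c) :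
    hexK a b c f g h ≤ 1 / 2 := by
  unfold hexK
  have := intervalIntegral.integral_mono_on (a := 0) (b := 1) (μ := MeasureTheory.volume) (by norm_num)
    ((hexKap_cont f g h ha hb hc).intervalIntegrable 0 1)
    (intervalIntegrable_const (c := (1/2 : ℝ)))
    (fun t _ => hexKap_le (by positivity) (by positivity) (by positivity))
  simpa using this

lemma hexK_symm (a b c f g h : ℝ) : hexK a b c f g h = hexK b a c g f h := by
  unfold hexK; simp_rw [hexKap_symm (a * _)]

lemma hexAng_diff {a b c : ℝ} (f g h : ℝ) (ha : 0 < a) (hb : 0 < b) (hc : 0 < c) :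
    hexAng (a * exp f) (b * exp g) (c * exp h) - hexAng a b c
      = hexK a b c f g h * (g - f) + hexK a c b f h g * (h - f) := by
  have hd : ∀ a f t : ℝ, HasDerivAt (fun t => a * exp (t * f)) (a * exp (t * f) * f) t := by
    intro a f t
    have := ((hasDerivAt_mul_const (x := t) f).exp).const_mul a
    exact this.congr_deriv (by ring)
  have c1 := hexKap_cont f g h ha hb hc
  have c2 := hexKap_cont f h g ha hc hb
  have key := intervalIntegral.integral_eq_sub_of_hasDerivAt (a := 0) (b := 1)
    (f := fun t => hexAng (a * exp (t * f)) (b * exp (t * g)) (c * exp (t * h)))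
    (fun t _ => hexAng_hasDerivAt (f := f) (g := g) (h := h) (by positivity) (by positivity) (by positivity) _ _ _ t
      (hd a f t) (hd b g t) (hd c h t) rfl rfl rfl)
    (Continuous.intervalIntegrable (by fun_prop) _ _)
  rw [intervalIntegral.integral_add (Continuous.intervalIntegrable (by fun_prop) _ _) (Continuous.intervalIntegrable (by fun_prop) _ _), intervalIntegral.integral_mul_const,
    intervalIntegral.integral_mul_const] at key
  simp only [one_mul, zero_mul, exp_zero, mul_one] at key
  exact key.symm

lemma hex_pointwise {c p q x y M : ℝ} (hc : 0 ≤ c) (hc1 : c ≤ 1) (hx : 0 ≤ x) (hy : 0 ≤ y)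
    (hxM : x ≤ M) (hyM : y ≤ M) :
    (p ^ 2 * x - q ^ 2 * y) * (c * (y - x)) ≤
      - (1 / 4) * (c * (p ^ 2 + q ^ 2) * (y - x) ^ 2) + 2 * M ^ 2 * (q - p) ^ 2 := by
  have h1 : (p ^ 2 * x - q ^ 2 * y) * (y - x) ≤
      - (1 / 4) * ((p ^ 2 + q ^ 2) * (y - x) ^ 2) + (q - p) ^ 2 * ((x + y) ^ 2 / 2) := by
    nlinarith [sq_nonneg ((p - q) * (x + y) - (p + q) * (y - x) / 2),
      mul_nonneg (sq_nonneg (p - q)) (sq_nonneg (y - x))]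
  have h2 : (x + y) ^ 2 / 2 ≤ 2 * M ^ 2 := by nlinarith
  have h3 : (q - p) ^ 2 * ((x + y) ^ 2 / 2) ≤ (q - p) ^ 2 * (2 * M ^ 2) :=
    mul_le_mul_of_nonneg_left h2 (sq_nonneg _)
  have h4 : 0 ≤ (q - p) ^ 2 * (2 * M ^ 2) := by positivity
  have h5 := mul_le_mul_of_nonneg_left (h1.trans (add_le_add_right h3 _)) hc
  nlinarith

lemma hex_caccioppoli {ι : Type*} [Fintype ι] (d : ι → ℤ × ℤ) (c : ι → ℤ × ℤ → ℝ)
    (hc : ∀ i v, 0 ≤ c i v) (hc1 : ∀ i v, c i v ≤ 1) (A : ℤ × ℤ → ℝ) (M : ℝ)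
    (hA : ∀ v, 0 ≤ A v) (hM : ∀ v, A v ≤ M)
    (hsub : ∀ v, 0 ≤ ∑ i, (c i v * (A (v + d i) - A v) + c i (v - d i) * (A (v - d i) - A v)))
    (φ : ℤ × ℤ → ℝ) (hφ : φ.support.Finite) (v₀ : ℤ × ℤ) (i₀ : ι) :
    c i₀ v₀ * (φ v₀) ^ 2 * (A (v₀ + d i₀) - A v₀) ^ 2 ≤
      8 * M ^ 2 * ∑ i, ∑' v, (φ (v + d i) - φ v) ^ 2 := by
  classical
  let ψ : ℤ × ℤ → ℝ := fun v => φ v ^ 2 * A v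
  let P : ι → ℤ × ℤ → ℝ := fun i v => c i v * (A (v + d i) - A v)
  have hφ' : ∀ i, (fun v => φ (v + d i)).support.Finite := fun i =>
    hφ.preimage (f := fun v => v + d i) (add_left_injective (d i)).injOn
  have fin1 : ∀ F : ℤ × ℤ → ℝ, (∀ v, φ v = 0 → F v = 0) → Summable F := fun F hF =>
    summable_of_hasFiniteSupport (hφ.subset fun v hv => fun h0 => hv (hF v h0))
  have fin2 : ∀ i, ∀ F : ℤ × ℤ → ℝ, (∀ v, φ v = 0 → φ (v + d i) = 0 → F v = 0) → Summable F := by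
    intro i F hF
    refine summable_of_hasFiniteSupport ((hφ.union (hφ' i)).subset fun v hv => ?_)
    by_contra hcon
    simp only [Set.mem_union, Function.mem_support, not_or, not_not] at hcon
    exact hv (hF v hcon.1 hcon.2)
  have s1 : ∀ i, Summable fun v => ψ v * P i v := fun i => fin1 _ (by intro v h; simp [ψ, h])
  have s2 : ∀ i, Summable fun v => ψ v * P i (v - d i) := fun i => fin1 _ (by intro v h; simp [ψ, h])
  have s3 : ∀ i, Summable fun v => ψ (v + d i) * P i v := fun i =>
    fin2 i _ (by intro v _ h; simp [ψ, h])
  have sh : ∀ i, ∑' v, ψ v * P i (v - d i) = ∑' v, ψ (v + d i) * P i v := by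
    intro i
    rw [← (Equiv.addRight (d i)).tsum_eq]
    simp
  have tot : 0 ≤ ∑ i, ∑' v, (ψ v * P i v - ψ (v + d i) * P i v) := by
    have : ∑ i, ∑' v, (ψ v * P i v - ψ (v + d i) * P i v)
        = ∑' v, ∑ i, (ψ v * P i v - ψ v * P i (v - d i)) := by
      rw [Summable.tsum_finsetSum (fun i _ => (s1 i).sub (s2 i))]
      refine Finset.sum_congr rfl fun i _ => ?_
      rw [(s1 i).tsum_sub (s3 i), (s1 i).tsum_sub (s2 i), sh i]
    rw [this]
    refine tsum_nonneg fun v => ?_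
    have h := mul_nonneg (mul_nonneg (sq_nonneg (φ v)) (hA v)) (hsub v)
    rw [Finset.mul_sum] at h
    refine h.trans (le_of_eq (Finset.sum_congr rfl fun i _ => ?_))
    simp only [ψ, P, sub_add_cancel]
    ring
  have sE : ∀ i, Summable fun v => (φ (v + d i) - φ v) ^ 2 := fun i =>
    fin2 i _ (by intro v h h'; simp [h, h'])
  let Q : ι → ℤ × ℤ → ℝ := fun i v => c i v * (φ v ^ 2 + φ (v + d i) ^ 2) * (A (v + d i) - A v) ^ 2
  have sQ : ∀ i, Summable (Q i) := fun i => fin2 i _ (by intro v h h'; simp [Q, h, h'])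
  have hQ0 : ∀ i v, 0 ≤ Q i v := fun i v => by have := hc i v; positivity
  have le : ∀ i, ∑' v, (ψ v * P i v - ψ (v + d i) * P i v) ≤
      -(1/4) * ∑' v, Q i v + 2 * M ^ 2 * ∑' v, (φ (v + d i) - φ v) ^ 2 := by
    intro i
    rw [← tsum_mul_left, ← tsum_mul_left, ← ((sQ i).mul_left _).tsum_add ((sE i).mul_left _)]
    refine ((s1 i).sub (s3 i)).tsum_le_tsum (fun v => ?_) (((sQ i).mul_left _).add ((sE i).mul_left _))
    rw [← sub_mul]
    exact hex_pointwise (hc i v) (hc1 i v) (hA _) (hA _) (hM _) (hM _)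
  have t2 := tot.trans (Finset.sum_le_sum fun i _ => le i)
  rw [Finset.sum_add_distrib, ← Finset.mul_sum, ← Finset.mul_sum] at t2
  have h6 : Q i₀ v₀ ≤ ∑ i, ∑' v, Q i v :=
    ((sQ i₀).le_tsum v₀ (fun v _ => hQ0 i₀ v)).trans
      (Finset.single_le_sum (f := fun i => ∑' v, Q i v) (fun i _ => tsum_nonneg (hQ0 i)) (Finset.mem_univ i₀))
  have h7 : c i₀ v₀ * (φ v₀) ^ 2 * (A (v₀ + d i₀) - A v₀) ^ 2 ≤ Q i₀ v₀ := by
    have := mul_nonneg (mul_nonneg (hc i₀ v₀) (sq_nonneg (φ (v₀ + d i₀)))) (sq_nonneg (A (v₀ + d i₀) - A v₀))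
    simp only [Q]; nlinarith
  linarith

/-- sup norm on `ℤ × ℤ` -/
def hexN (v : ℤ × ℤ) : ℕ := max v.1.natAbs v.2.natAbs

lemma hex_cutoff (ε : ℝ) (hε : 0 < ε) : ∃ φ : ℤ × ℤ → ℝ, φ.support.Finite ∧ φ 0 = 1 ∧
    ∀ d : ℤ × ℤ, hexN d ≤ 1 → ∑' v, (φ (v + d) - φ v) ^ 2 ≤ ε := by
  let H : ℕ → ℝ := fun n => ∑ k ∈ Finset.range n, 1 / ((k : ℝ) + 1)
  have Hs : ∀ n, H (n + 1) = H n + 1 / ((n : ℝ) + 1) := fun n => Finset.sum_range_succ _ _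
  have Hm : Monotone H := monotone_nat_of_le_succ fun n => by
    rw [Hs]; have : (0:ℝ) ≤ 1 / ((n : ℝ) + 1) := by positivity
    linarith
  have H0 : H 0 = 0 := by simp [H]
  have Ht : Filter.Tendsto H Filter.atTop Filter.atTop := Real.tendsto_sum_range_one_div_nat_succ_atTop
  obtain ⟨N, hN⟩ := (Ht.eventually_ge_atTop (max 1 (64 / ε))).exists
  have hN1 : 1 ≤ H N := (le_max_left _ _).trans hN
  have hN2 : 64 / ε ≤ H N := (le_max_right _ _).trans hN
  have hHN : 0 < H N := by linarith
  let g : ℕ → ℝ := fun n => 1 - H (min n N) / H N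
  have g0 : ∀ n, N ≤ n → g n = 0 := fun n hn => by simp [g, min_eq_right hn, hHN.ne']
  have gs : ∀ n, 0 ≤ g n - g (n + 1) ∧ g n - g (n + 1) ≤ 1 / (((n : ℝ) + 1) * H N) := by
    intro n
    by_cases h : n < N
    · have : g n - g (n + 1) = 1 / (((n : ℝ) + 1) * H N) := by
        simp only [g, min_eq_left h.le, min_eq_left (Nat.succ_le_of_lt h), Hs]
        field_simp; ring
      rw [this]; exact ⟨by positivity, le_rfl⟩
    · rw [g0 n (by omega), g0 (n+1) (by omega)]; simp; positivity
  let G : ℕ → ℝ := fun n => 4 / (((n : ℝ) + 1) * H N) ^ 2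
  have gd : ∀ n m : ℕ, n ≤ m + 1 → m ≤ n + 1 → (g m - g n) ^ 2 ≤ G n := by
    intro n m h1 h2
    have key : |g m - g n| ≤ 2 / (((n : ℝ) + 1) * H N) := by
      have hpos : (0:ℝ) ≤ 1 / (((n : ℝ) + 1) * H N) := by positivity
      have e2 : 2 / (((n : ℝ) + 1) * H N) = 2 * (1 / (((n : ℝ) + 1) * H N)) := by ring
      rw [e2]
      obtain h | h | h : m = n ∨ m = n + 1 ∨ n = m + 1 := by omega
      · subst h; simp; positivity
      · subst h
        have := gs n
        rw [abs_le]; constructor <;> linarith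
      · have := gs m
        have h3 : 1 / (((m : ℝ) + 1) * H N) ≤ 2 * (1 / (((n : ℝ) + 1) * H N)) := by
          subst h
          push_cast
          rw [show 2 * (1 / (((m : ℝ) + 1 + 1) * H N)) = 2 / (((m : ℝ) + 1 + 1) * H N) by ring]
          rw [div_le_div_iff₀ (by positivity) (by positivity)]
          have : (0:ℝ) ≤ m * H N := by positivity
          nlinarith
        rw [← h] at this
        rw [abs_le]; constructor <;> linarith
    calc (g m - g n) ^ 2 = |g m - g n| ^ 2 := (sq_abs _).symm
      _ ≤ (2 / (((n : ℝ) + 1) * H N)) ^ 2 := by gcongr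
      _ = G n := by simp only [G]; rw [div_pow]; norm_num
  have hmem : ∀ n, ∀ v : ℤ × ℤ, v ∈ Finset.box n ↔ hexN v = n := fun n v => Int.mem_box
  let S : Finset (ℤ × ℤ) := (Finset.range (N + 1)).biUnion fun n => Finset.box n
  have hS : ∀ v, v ∉ S → N < hexN v := by
    intro v hv
    by_contra hcon
    exact hv (Finset.mem_biUnion.2 ⟨hexN v, Finset.mem_range.2 (by omega), (hmem _ _).2 rfl⟩)
  refine ⟨fun v => g (hexN v), S.finite_toSet.subset fun v hv => ?_, ?_, ?_⟩
  · by_contra hcon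
    exact hv (g0 _ (hS v (by simpa using hcon)).le)
  · simp [hexN, g, H0]
  · intro d hd
    have hn : ∀ v, hexN v ≤ hexN (v + d) + 1 ∧ hexN (v + d) ≤ hexN v + 1 := by
      intro v
      simp only [hexN, Prod.fst_add, Prod.snd_add] at hd ⊢
      omega
    rw [tsum_eq_sum (s := S)]
    · calc ∑ v ∈ S, (g (hexN (v + d)) - g (hexN v)) ^ 2 ≤ ∑ v ∈ S, G (hexN v) :=
            Finset.sum_le_sum fun v _ => gd _ _ (hn v).1 (hn v).2
        _ = ∑ n ∈ Finset.range (N + 1), ∑ v ∈ Finset.box n, G (hexN (v : ℤ × ℤ)) := by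
            refine Finset.sum_biUnion ?_
            intro i _ j _ hij
            rw [Function.onFun, Finset.disjoint_left]
            intro v h1 h2
            exact hij (((hmem _ _).1 h1).symm.trans ((hmem _ _).1 h2))
        _ ≤ ∑ n ∈ Finset.range (N + 1), 32 / H N ^ 2 * (1 / ((n : ℝ) + 1)) := by
            refine Finset.sum_le_sum fun n _ => ?_
            rw [Finset.sum_congr rfl (fun v hv => by rw [(hmem n v).1 hv]), Finset.sum_const,
              nsmul_eq_mul]
            have hcard : ((Finset.box n : Finset (ℤ × ℤ)).card : ℝ) ≤ 8 * ((n : ℝ) + 1) := by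
              rcases Nat.eq_zero_or_pos n with h | h
              · subst h; simp
              · rw [Int.card_box h.ne']; push_cast; linarith
            calc _ ≤ 8 * ((n : ℝ) + 1) * G n := by
                    apply mul_le_mul_of_nonneg_right hcard; simp only [G]; positivity
              _ = _ := by simp only [G]; field_simp; norm_num
        _ = 32 / H N ^ 2 * H (N + 1) := by rw [← Finset.mul_sum]
        _ ≤ 32 / H N ^ 2 * (2 * H N) := by
            apply mul_le_mul_of_nonneg_left _ (by positivity)
            rw [Hs]
            have : 1 / ((N : ℝ) + 1) ≤ 1 := by
              rw [div_le_one (by positivity)]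
              have : (0:ℝ) ≤ N := by positivity
              linarith
            linarith
        _ = 64 / H N := by field_simp; norm_num
        _ ≤ ε := by
            rw [div_le_iff₀ hε] at hN2
            rw [div_le_iff₀ hHN]; linarith
    · intro v hv
      have := hS v hv
      have := hn v
      simp only [g0 (hexN v) (by omega), g0 (hexN (v + d)) (by omega)]; simp

lemma hex_liouville_s5 {ι : Type*} [Fintype ι] (d : ι → ℤ × ℤ) (hd : ∀ i, hexN (d i) ≤ 1)
    (c : ι → ℤ × ℤ → ℝ)
    (hc : ∀ i v, 0 < c i v) (hc1 : ∀ i v, c i v ≤ 1) (A : ℤ × ℤ → ℝ) (M : ℝ)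
    (hA : ∀ v, 0 ≤ A v) (hM : ∀ v, A v ≤ M)
    (hsub : ∀ v, 0 ≤ ∑ i, (c i v * (A (v + d i) - A v) + c i (v - d i) * (A (v - d i) - A v)))
    (v₀ : ℤ × ℤ) (i₀ : ι) : A (v₀ + d i₀) = A v₀ := by
  have key : ∀ ε > 0, c i₀ v₀ * (A (v₀ + d i₀) - A v₀) ^ 2 ≤ 8 * M ^ 2 * (Fintype.card ι * ε) := by
    intro ε hε
    obtain ⟨φ, h1, h2, h3⟩ := hex_cutoff ε hε
    have := hex_caccioppoli d c (fun i v => (hc i v).le) hc1 A M hA hM hsub (fun v => φ (v - v₀))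
      (h1.preimage (f := fun v => v - v₀) (sub_left_injective).injOn) v₀ i₀
    simp only [sub_self, h2, one_pow, mul_one] at this
    refine this.trans (mul_le_mul_of_nonneg_left ?_ (by positivity))
    have : ∀ i ∈ Finset.univ, ∑' v, (φ (v + d i - v₀) - φ (v - v₀)) ^ 2 ≤ ε := by
      intro i _
      rw [← (Equiv.addRight v₀).tsum_eq]
      refine le_trans (le_of_eq (tsum_congr fun v => ?_)) (h3 (d i) (hd i))
      simp only [Equiv.coe_addRight, add_sub_cancel_right]
      rw [show v + v₀ + d i - v₀ = v + d i by abel]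
    simpa using Finset.sum_le_card_nsmul _ _ _ this
  have h0 : c i₀ v₀ * (A (v₀ + d i₀) - A v₀) ^ 2 ≤ 0 := by
    have ht : Filter.Tendsto (fun ε : ℝ => 8 * M ^ 2 * (Fintype.card ι * ε)) (nhdsWithin 0 (Set.Ioi 0)) (nhds 0) := by
      have : Continuous (fun ε : ℝ => 8 * M ^ 2 * (Fintype.card ι * ε)) := by fun_prop
      simpa using (this.tendsto 0).mono_left nhdsWithin_le_nhds
    exact ge_of_tendsto ht (eventually_nhdsWithin_of_forall key)
  have h1 : (A (v₀ + d i₀) - A v₀) ^ 2 ≤ 0 := by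
    by_contra h
    have := mul_pos (hc i₀ v₀) (not_le.1 h)
    linarith
  have := pow_eq_zero_iff (two_ne_zero) |>.1 (le_antisymm h1 (sq_nonneg _))
  linarith

/-- coordinates on the lattice -/
noncomputable def hexZ (v : ℤ × ℤ) : ℂ := (v.1 : ℂ) + (v.2 : ℂ) * hexω

lemma hexω_sq : hexω ^ 2 = hexω - 1 := by
  have h : hexω = 1 / 2 + (√3 / 2 : ℝ) * Complex.I := by
    unfold hexω
    rw [show (Real.pi / 3 : ℂ) = ((Real.pi / 3 : ℝ) : ℂ) by push_cast; ring, Complex.exp_mul_I,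
      ← Complex.ofReal_cos, ← Complex.ofReal_sin, Real.cos_pi_div_three, Real.sin_pi_div_three]
    push_cast; ring
  have h3 : ((√3 : ℝ) : ℂ) ^ 2 = 3 := by
    rw [← Complex.ofReal_pow, Real.sq_sqrt (by norm_num)]; norm_num
  rw [h]
  push_cast
  linear_combination (1 / 4 : ℂ) * Complex.I ^ 2 * h3 + (3 / 4 : ℂ) * Complex.I_sq

lemma hexAngleSum_eq (ρ : ℂ → ℝ) (P : ℤ × ℤ → ℝ) (hP : ∀ v, P v = ρ (hexZ v)) (v : ℤ × ℤ) :
    hexAngleSum ρ (hexZ v) =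
      hexAng (P v) (P (v + (1, 0))) (P (v + (0, 1))) +
      hexAng (P v) (P (v + (0, 1))) (P (v + (-1, 1))) +
      hexAng (P v) (P (v + (-1, 1))) (P (v - (1, 0))) +
      hexAng (P v) (P (v - (1, 0))) (P (v - (0, 1))) +
      hexAng (P v) (P (v - (0, 1))) (P (v - (-1, 1))) +
      hexAng (P v) (P (v - (-1, 1))) (P (v + (1, 0))) := by
  have w2 := hexω_sq
  have w3 : hexω ^ 3 = -1 := by linear_combination (hexω + 1) * w2
  have e0 : hexZ v + hexω ^ 0 = hexZ (v + (1, 0)) := by simp [hexZ]; ring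
  have e1 : hexZ v + hexω ^ 1 = hexZ (v + (0, 1)) := by simp [hexZ]; ring
  have e2 : hexZ v + hexω ^ 2 = hexZ (v + (-1, 1)) := by simp [hexZ, w2]; ring
  have e3 : hexZ v + hexω ^ 3 = hexZ (v - (1, 0)) := by simp [hexZ, w3]; ring
  have e4 : hexZ v + hexω ^ 4 = hexZ (v - (0, 1)) := by
    simp [hexZ]; linear_combination hexω * w3
  have e5 : hexZ v + hexω ^ 5 = hexZ (v - (-1, 1)) := by
    simp [hexZ]; linear_combination hexω ^ 2 * w3 - w2
  have e6 : hexZ v + hexω ^ 6 = hexZ (v + (1, 0)) := by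
    simp [hexZ]; linear_combination (hexω ^ 3 - 1) * w3
  unfold hexAngleSum hexAng
  simp only [Finset.sum_range_succ, Finset.sum_range_zero, Nat.reduceAdd, zero_add, e0, e1, e2, e3, e4, e5, e6, hP]

/-- The three positive directions. -/
def hexD : Fin 3 → ℤ × ℤ := ![(1, 0), (0, 1), (-1, 1)]

lemma hexRatio_const (ρ σ : ℂ → ℝ)
    (hρ : ∀ v ∈ hexLattice, 0 < ρ v)
    (hσ : ∀ v ∈ hexLattice, 0 < σ v)
    (hsub : ∀ v ∈ hexLattice, hexAngleSum ρ v ≤ hexAngleSum σ v) (M : ℝ)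
    (hM : ∀ v ∈ hexLattice, σ v / ρ v ≤ M) (v₀ : ℤ × ℤ) (i₀ : Fin 3) :
    σ (hexZ (v₀ + hexD i₀)) / ρ (hexZ (v₀ + hexD i₀)) = σ (hexZ v₀) / ρ (hexZ v₀) := by
  have hmem : ∀ v, hexZ v ∈ hexLattice := fun v => ⟨v.1, v.2, rfl⟩
  obtain ⟨P, hP⟩ : ∃ P : ℤ × ℤ → ℝ, ∀ v, P v = ρ (hexZ v) := ⟨_, fun _ => rfl⟩
  obtain ⟨S, hS⟩ : ∃ S : ℤ × ℤ → ℝ, ∀ v, S v = σ (hexZ v) := ⟨_, fun _ => rfl⟩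
  have P0 : ∀ v, 0 < P v := fun v => by rw [hP]; exact hρ _ (hmem v)
  have S0 : ∀ v, 0 < S v := fun v => by rw [hS]; exact hσ _ (hmem v)
  obtain ⟨F, hF⟩ : ∃ F : ℤ × ℤ → ℝ, ∀ v, F v = log (S v / P v) := ⟨_, fun _ => rfl⟩
  have hA : ∀ v, exp (F v) = S v / P v := fun v => by
    rw [hF, exp_log (div_pos (S0 v) (P0 v))]
  have hSF : ∀ v, S v = P v * exp (F v) := fun v => by
    rw [hA]; have := (P0 v).ne'; field_simp
  obtain ⟨k, hk⟩ : ∃ k : ℤ × ℤ → ℤ × ℤ → ℤ × ℤ → ℝ, ∀ p q s,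
    k p q s = hexK (P p) (P q) (P s) (F p) (F q) (F s) := ⟨_, fun _ _ _ => rfl⟩
  have k0 : ∀ p q s, 0 < k p q s := fun p q s => by
    rw [hk]; exact hexK_pos _ _ _ (P0 _) (P0 _) (P0 _)
  have k1 : ∀ p q s, k p q s ≤ 1 / 2 := fun p q s => by
    rw [hk]; exact hexK_le _ _ _ (P0 _) (P0 _) (P0 _)
  have ks : ∀ p q s, k p q s = k q p s := fun p q s => by
    rw [hk, hk]; exact hexK_symm _ _ _ _ _ _
  have kd : ∀ p q s, hexAng (S p) (S q) (S s) - hexAng (P p) (P q) (P s) =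
      k p q s * (F q - F p) + k p s q * (F s - F p) := fun p q s => by
    rw [hSF p, hSF q, hSF s, hk, hk]; exact hexAng_diff _ _ _ (P0 _) (P0 _) (P0 _)
  let L : Fin 3 → ℤ × ℤ := ![(0, 1), (-1, 1), (-1, 0)]
  let R : Fin 3 → ℤ × ℤ := ![(1, -1), (1, 0), (0, 1)]
  let c : Fin 3 → ℤ × ℤ → ℝ := fun i v => k v (v + hexD i) (v + L i) + k v (v + hexD i) (v + R i)
  have c0 : ∀ i v, 0 < c i v := fun i v => add_pos (k0 _ _ _) (k0 _ _ _)
  have c1 : ∀ i v, c i v ≤ 1 := fun i v => by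
    have := k1 v (v + hexD i) (v + L i)
    have := k1 v (v + hexD i) (v + R i)
    simp only [c]; linarith
  have sub : ∀ v, 0 ≤ ∑ i, (c i v * (F (v + hexD i) - F v) + c i (v - hexD i) * (F (v - hexD i) - F v)) := by
    intro v
    have h := hsub _ (hmem v)
    rw [hexAngleSum_eq ρ P hP, hexAngleSum_eq σ S hS] at h
    have d0 := kd v (v + (1, 0)) (v + (0, 1))
    have d1 := kd v (v + (0, 1)) (v + (-1, 1))
    have d2 := kd v (v + (-1, 1)) (v - (1, 0))
    have d3 := kd v (v - (1, 0)) (v - (0, 1))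
    have d4 := kd v (v - (0, 1)) (v - (-1, 1))
    have d5 := kd v (v - (-1, 1)) (v + (1, 0))
    obtain ⟨x, y⟩ := v
    simp only [Fin.sum_univ_three, c, L, R, hexD, Matrix.cons_val_zero, Matrix.cons_val_one, Matrix.cons_val]
    rw [ks ((x, y) - (1, 0)), ks ((x, y) - (1, 0)), ks ((x, y) - (0, 1)), ks ((x, y) - (0, 1)),
      ks ((x, y) - (-1, 1)), ks ((x, y) - (-1, 1))]
    simp only [Prod.mk_add_mk, Prod.mk_sub_mk, add_zero, sub_zero, sub_add_cancel, sub_neg_eq_add, ← sub_eq_add_neg, add_sub_cancel_right] at *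
    linarith
  have subA : ∀ v, 0 ≤ ∑ i, (c i v * (exp (F (v + hexD i)) - exp (F v)) + c i (v - hexD i) * (exp (F (v - hexD i)) - exp (F v))) := by
    intro v
    have h := mul_nonneg (exp_pos (F v)).le (sub v)
    rw [Finset.mul_sum] at h
    refine h.trans (Finset.sum_le_sum fun i _ => ?_)
    have ex : ∀ x y : ℝ, exp x * (y - x) ≤ exp y - exp x := by
      intro x y
      have h1 := Real.add_one_le_exp (y - x)
      have h2 : exp y = exp x * exp (y - x) := by rw [← exp_add]; ring_nf
      rw [h2]; nlinarith [exp_pos x]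
    have h1 := mul_le_mul_of_nonneg_left (ex (F v) (F (v + hexD i))) (c0 i v).le
    have h2 := mul_le_mul_of_nonneg_left (ex (F v) (F (v - hexD i))) (c0 i (v - hexD i)).le
    linarith
  have := hex_liouville_s5 hexD (by decide) c c0 c1 (fun v => exp (F v)) M (fun v => (exp_pos _).le)
    (fun v => by simp only [hA, hP, hS]; exact hM _ (hmem v)) subA v₀ i₀
  simpa only [hA, hP, hS] using this

/-- Theorem 3.1 for the hexagonal complex: if the labelled complex `K(σ)`
(`σ` playing the role of `ρ̃`) is a subpacking for the angle sum function of
`K(ρ)`, then the ratio `A = σ/ρ` is bounded above iff it is constant. -/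
theorem hex_subpacking_ratio_bounded_iff_const
    (ρ σ : ℂ → ℝ)
    (hρ : ∀ v ∈ hexLattice, 0 < ρ v)
    (hσ : ∀ v ∈ hexLattice, 0 < σ v)
    (hsub : ∀ v ∈ hexLattice, hexAngleSum ρ v ≤ hexAngleSum σ v) :
    (∃ M : ℝ, ∀ v ∈ hexLattice, σ v / ρ v ≤ M) ↔
      (∃ c : ℝ, ∀ v ∈ hexLattice, σ v / ρ v = c) := by
  constructor
  · rintro ⟨M, hM⟩
    have key := hexRatio_const ρ σ hρ hσ hsub M hM
    obtain ⟨A, hA⟩ : ∃ A : ℤ → ℤ → ℝ, ∀ a b, A a b = σ (hexZ (a, b)) / ρ (hexZ (a, b)) :=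
      ⟨_, fun _ _ => rfl⟩
    have h1 : ∀ a b, A (a + 1) b = A a b := fun a b => by
      have := key (a, b) 0
      simpa [hexD, hA] using this
    have h2 : ∀ a b, A a (b + 1) = A a b := fun a b => by
      have := key (a, b) 1
      simpa [hexD, hA] using this
    have h3 : ∀ a b, A a b = A 0 b := fun a b => by
      induction a using Int.induction_on with
      | zero => rfl
      | succ i ih => rw [h1, ih]
      | pred i ih => rw [← ih, ← h1 (-(i : ℤ) - 1), sub_add_cancel]
    have h4 : ∀ b, A 0 b = A 0 0 := fun b => by
      induction b using Int.induction_on with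
      | zero => rfl
      | succ i ih => rw [h2, ih]
      | pred i ih => rw [← ih, ← h2 0 (-(i : ℤ) - 1), sub_add_cancel]
    refine ⟨A 0 0, ?_⟩
    rintro v ⟨a, b, rfl⟩
    rw [← h4 b, ← h3 a b, hA]
    rfl
  · rintro ⟨c, hc⟩
    exact ⟨c, fun v hv => (hc v hv).le⟩
end

section
/- Let L = { a + b·ω : a, b ∈ ℤ } ⊂ ℂ with ω = exp(iπ/3) be the triangular lattice, so that each v ∈ L has the six neighbors v + ω^k, k = 0,…,5, in cyclic order. For ρ : L → (0,∞) define the angle sum Θ_ρ(v) = Σ_{k=0}^{5} arccos( 1 − 2ρ(v+ω^k)ρ(v+ω^{k+1}) / ((ρ(v)+ρ(v+ω^k))(ρ(v)+ρ(v+ω^{k+1}))) ), indices k taken mod 6. If ρ : L → (0,∞) satisfies Θ_ρ(v) ≥ 2π for every v ∈ L and ρ is bounded above, then ρ is constant. -/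
open Real Set

/-- The inradius of the triangle of centers. -/
noncomputable def hexIn (a b c : ℝ) : ℝ := √(a * b * c / (a + b + c))

lemma hexAng_symm (a b c : ℝ) : hexAng a b c = hexAng a c b := by
  unfold hexAng
  congr 2
  rw [mul_right_comm, mul_comm (a + b)]

lemma hexIn_rot (a b c : ℝ) : hexIn b a c = hexIn a b c := by
  unfold hexIn
  congr 2 <;> ring

lemma hexIn_rot' (a b c : ℝ) : hexIn c a b = hexIn a b c := by
  unfold hexIn
  congr 2 <;> ring

lemma hexIn_pos {a b c : ℝ} (ha : 0 < a) (hb : 0 < b) (hc : 0 < c) : 0 < hexIn a b c := by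
  unfold hexIn; positivity

lemma hexIn_sq {a b c : ℝ} (ha : 0 < a) (hb : 0 < b) (hc : 0 < c) :
    hexIn a b c ^ 2 * (a + b + c) = a * b * c := by
  unfold hexIn
  rw [Real.sq_sqrt (by positivity)]
  field_simp

lemma hexIn_le {a b c M : ℝ} (ha : 0 < a) (hb : 0 < b) (hc : 0 < c) (haM : a ≤ M)
    (hbM : b ≤ M) : hexIn a b c ≤ M := by
  unfold hexIn
  rw [Real.sqrt_le_left (by linarith), div_le_iff₀ (by positivity)]
  have h1 : a * b ≤ M ^ 2 := by nlinarith
  have h2 : a * b * c ≤ M ^ 2 * c := by gcongr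
  nlinarith [mul_pos (pow_pos (ha.trans_le haM) 2) (add_pos ha hb)]

lemma hexAng_eq {a b c : ℝ} (ha : 0 < a) (hb : 0 < b) (hc : 0 < c) :
    hexAng a b c = 2 * arctan (hexIn a b c / a) := by
  have hr := hexIn_pos ha hb hc
  have hsq := hexIn_sq ha hb hc
  set r := hexIn a b c
  have hr2 : r ^ 2 = a * b * c / (a + b + c) := by field_simp; linarith
  unfold hexAng
  have h0 : 0 < arctan (r / a) := by
    rw [← arctan_zero]; exact arctan_strictMono (by positivity)
  have h1 := arctan_lt_pi_div_two (r / a)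
  rw [← arccos_cos (x := 2 * arctan (r / a)) (by linarith) (by linarith)]
  congr 1
  rw [cos_two_mul, cos_sq_arctan, div_pow, hr2]
  field_simp
  ring

lemma hexAng_eq' {a b c : ℝ} (ha : 0 < a) (hb : 0 < b) (hc : 0 < c) :
    hexAng a b c = π - 2 * arctan (a / hexIn a b c) := by
  rw [hexAng_eq ha hb hc, ← inv_div, arctan_inv_of_pos (div_pos ha (hexIn_pos ha hb hc))]
  ring

lemma hexAng_sum {a b c : ℝ} (ha : 0 < a) (hb : 0 < b) (hc : 0 < c) :
    hexAng a b c + hexAng b a c + hexAng c a b = π := by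
  rw [hexAng_eq ha hb hc, hexAng_eq hb ha hc, hexAng_eq' hc ha hb, hexIn_rot a b c,
    hexIn_rot' a b c]
  have hr := hexIn_pos ha hb hc
  have hsq := hexIn_sq ha hb hc
  set r := hexIn a b c
  have hr2 : r ^ 2 = a * b * c / (a + b + c) := by field_simp; linarith
  have hxy : r / a * (r / b) = c / (a + b + c) := by
    have : r / a * (r / b) = r ^ 2 / (a * b) := by field_simp
    rw [this, hr2]; field_simp
  have hlt : r / a * (r / b) < 1 := by
    rw [hxy, div_lt_one (by positivity)]; linarith
  have := arctan_add hlt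
  rw [hxy] at this
  have e : (r / a + r / b) / (1 - c / (a + b + c)) = c / r := by
    have : 1 - c / (a + b + c) = (a + b) / (a + b + c) := by field_simp; ring
    rw [this]
    field_simp
    linear_combination (a+b) * hsq
  rw [e] at this
  linarith

lemma arctan_mono_ineq (x y : ℝ) :
    (arctan x - arctan y) ^ 2 ≤ (x - y) * (arctan x - arctan y) := by
  have key : ∀ x y : ℝ, y ≤ x → 0 ≤ arctan x - arctan y ∧ arctan x - arctan y ≤ x - y := by
    intro x y h
    refine ⟨sub_nonneg.2 (arctan_mono h), ?_⟩
    have hm : Monotone (fun t : ℝ => t - arctan t) := by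
      apply monotone_of_deriv_nonneg
      · exact differentiable_id.sub differentiable_arctan
      · intro t
        have : HasDerivAt (fun t : ℝ => t - arctan t) (1 - 1 / (1 + t ^ 2)) t :=
          (hasDerivAt_id t).sub (hasDerivAt_arctan t)
        rw [this.deriv, sub_nonneg, div_le_one (by positivity)]
        nlinarith [sq_nonneg t]
    have := hm h
    simp only at this
    linarith
  rcases le_total y x with h | h
  · obtain ⟨h1, h2⟩ := key x y h
    nlinarith
  · obtain ⟨h1, h2⟩ := key y x h
    nlinarith

lemma arctan_sqrt_three' : arctan (√3) = π / 3 := by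
  rw [← tan_pi_div_three, arctan_tan] <;> linarith [pi_pos]

lemma hexAng_single {a b c : ℝ} (ha : 0 < a) (hb : 0 < b) (hc : 0 < c) :
    a * (hexAng a b c - π / 3) ≤ hexIn a b c *
      (√3 * (hexAng a b c - π / 3) - (hexAng a b c - π / 3) ^ 2 / 2) := by
  have hr := hexIn_pos ha hb hc
  rw [hexAng_eq' ha hb hc]
  set r := hexIn a b c
  have h := arctan_mono_ineq (a / r) (√3)
  rw [arctan_sqrt_three'] at h
  have e : a = r * (a / r) := by field_simp
  set y := a / r
  rw [e]
  nlinarith [mul_le_mul_of_nonneg_left h hr.le]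

lemma hexAng_abs (a b c : ℝ) : |hexAng a b c - π / 3| ≤ 4 := by
  have h1 : 0 ≤ hexAng a b c := arccos_nonneg _
  have h2 : hexAng a b c ≤ π := arccos_le_pi _
  have := pi_lt_four
  rw [abs_le]; constructor <;> linarith [pi_pos]

lemma hexAng_rigid {a b c : ℝ} (ha : 0 < a) (hb : 0 < b) (hc : 0 < c)
    (h : hexAng a b c - π / 3 = 0) : a = √3 * hexIn a b c := by
  have hr := hexIn_pos ha hb hc
  rw [hexAng_eq' ha hb hc] at h
  have : arctan (a / hexIn a b c) = arctan (√3) := by rw [arctan_sqrt_three']; linarith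
  have := arctan_injective this
  rw [div_eq_iff hr.ne'] at this
  exact this

lemma weight_ineq {p q d : ℝ} (hd : |d| ≤ 4) :
    √3 * ((q ^ 2 - p ^ 2) * d) ≤ q ^ 2 * d ^ 2 / 4 + 20 * (q - p) ^ 2 := by
  have h3 : √3 ^ 2 = 3 := Real.sq_sqrt (by norm_num)
  have h0 : 0 ≤ √3 := Real.sqrt_nonneg 3
  have h2 : √3 ≤ 2 := by nlinarith
  have h4 : -(√3 * d) ≤ 8 := by
    have := (abs_le.1 hd).1
    nlinarith
  have e : √3 * ((q ^ 2 - p ^ 2) * d) = 2 * √3 * (q - p) * (q * d) + (-(√3 * d)) * (q - p) ^ 2 := by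
    ring
  have h5 := mul_le_mul_of_nonneg_right h4 (sq_nonneg (q - p))
  have h6 : 2 * √3 * (q - p) * (q * d) ≤ q ^ 2 * d ^ 2 / 4 + 12 * (q - p) ^ 2 := by
    nlinarith [sq_nonneg (q * d / 2 - 2 * √3 * (q - p))]
  rw [e]; linarith

/-- The energy inequality on one triangle. -/
lemma tri_ineq {a b c M : ℝ} (p q s : ℝ) (ha : 0 < a) (hb : 0 < b) (hc : 0 < c)
    (haM : a ≤ M) (hbM : b ≤ M) :
    p ^ 2 * a * (hexAng a b c - π / 3) + q ^ 2 * b * (hexAng b a c - π / 3)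
      + s ^ 2 * c * (hexAng c a b - π / 3) ≤
    20 * M * ((q - p) ^ 2 + (s - p) ^ 2) - hexIn a b c / 4 *
      (p ^ 2 * (hexAng a b c - π / 3) ^ 2 + q ^ 2 * (hexAng b a c - π / 3) ^ 2
        + s ^ 2 * (hexAng c a b - π / 3) ^ 2) := by
  have hr := hexIn_pos ha hb hc
  have hrM := hexIn_le ha hb hc haM hbM
  have hs := hexAng_sum ha hb hc
  have i1 := hexAng_single ha hb hc
  have i2 := hexAng_single hb ha hc
  have i3 := hexAng_single hc ha hb
  rw [hexIn_rot] at i2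
  rw [hexIn_rot'] at i3
  have w2 := weight_ineq (p := p) (q := q) (hexAng_abs b a c)
  have w3 := weight_ineq (p := p) (q := s) (hexAng_abs c a b)
  have hd : (hexAng a b c - π / 3) = -(hexAng b a c - π / 3) - (hexAng c a b - π / 3) := by
    linarith
  set r := hexIn a b c
  set d1 := hexAng a b c - π / 3
  set d2 := hexAng b a c - π / 3
  set d3 := hexAng c a b - π / 3
  have j1 := mul_le_mul_of_nonneg_left i1 (sq_nonneg p)
  have j2 := mul_le_mul_of_nonneg_left i2 (sq_nonneg q)
  have j3 := mul_le_mul_of_nonneg_left i3 (sq_nonneg s)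
  have k : r * (√3 * ((q ^ 2 - p ^ 2) * d2) + √3 * ((s ^ 2 - p ^ 2) * d3)) ≤
      r * (q ^ 2 * d2 ^ 2 / 4 + s ^ 2 * d3 ^ 2 / 4)
        + 20 * M * ((q - p) ^ 2 + (s - p) ^ 2) := by
    have k1 := mul_le_mul_of_nonneg_left (add_le_add w2 w3) hr.le
    have k2 := mul_le_mul_of_nonneg_right hrM (by positivity :
      0 ≤ (q - p) ^ 2 + (s - p) ^ 2)
    linarith
  have k3 : 0 ≤ r * (p ^ 2 * d1 ^ 2) := by positivity
  have k4 : r * (√3 * (p ^ 2 * d1 + q ^ 2 * d2 + s ^ 2 * d3)) =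
      r * (√3 * ((q ^ 2 - p ^ 2) * d2) + √3 * ((s ^ 2 - p ^ 2) * d3)) := by
    rw [hd]; ring
  linarith

/-- Harmonic numbers. -/
noncomputable def hexH (n : ℕ) : ℝ := ∑ i ∈ Finset.range n, (1 / (i + 1) : ℝ)

lemma hexH_succ (n : ℕ) : hexH (n + 1) = hexH n + 1 / (n + 1) := by
  simp [hexH, Finset.sum_range_succ]

lemma hexH_mono : Monotone hexH := by
  apply monotone_nat_of_le_succ
  intro n
  rw [hexH_succ]
  have : (0 : ℝ) ≤ 1 / (n + 1) := by positivity
  linarith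

/-- Logarithmic cutoff. -/
noncomputable def hexCut (n : ℕ) (v : ℤ × ℤ) : ℝ := max 0 (1 - hexH (hexN v) / hexH n)

lemma hexCut_zero {n : ℕ} (hn : 0 < hexH n) {v : ℤ × ℤ} (h : n ≤ hexN v) : hexCut n v = 0 := by
  unfold hexCut
  apply max_eq_left
  have := hexH_mono h
  rw [sub_nonpos, le_div_iff₀ hn]
  linarith

lemma hexH_diff {k m : ℕ} (h1 : k ≤ m + 1) (h2 : m ≤ k + 1) :
    |hexH k - hexH m| ≤ 2 / (m + 1) := by
  have hp : (0 : ℝ) < (m : ℝ) + 1 := by positivity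
  have : k = m + 1 ∨ k = m ∨ m = k + 1 := by omega
  rcases this with rfl | rfl | rfl
  · rw [hexH_succ, add_sub_cancel_left, abs_of_nonneg (by positivity)]
    gcongr; norm_num
  · simp; positivity
  · rw [hexH_succ, sub_add_cancel_left, abs_neg, abs_of_nonneg (by positivity)]
    rw [div_le_div_iff₀ (by positivity) (by positivity)]
    push_cast
    linarith [(Nat.cast_nonneg k : (0 : ℝ) ≤ k)]

lemma hexCut_diff {n : ℕ} (hn : 0 < hexH n) {v w : ℤ × ℤ} (h1 : hexN w ≤ hexN v + 1)
    (h2 : hexN v ≤ hexN w + 1) :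
    (hexCut n w - hexCut n v) ^ 2 ≤ 4 / ((hexN v + 1) ^ 2 * hexH n ^ 2) := by
  have h : |hexCut n w - hexCut n v| ≤ 2 / ((hexN v + 1) * hexH n) := by
    calc |hexCut n w - hexCut n v| ≤
        |(1 - hexH (hexN w) / hexH n) - (1 - hexH (hexN v) / hexH n)| := by
          unfold hexCut
          rw [max_comm 0, max_comm 0]
          exact abs_max_sub_max_le_abs _ _ _
      _ = |hexH (hexN w) - hexH (hexN v)| / hexH n := by
          rw [abs_sub_comm, ← abs_of_pos hn, ← abs_div, abs_of_pos hn]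
          congr 1; ring
      _ ≤ (2 / (hexN v + 1)) / hexH n := by
          gcongr
          exact hexH_diff h1 h2
      _ = _ := by rw [div_div]
  rw [← sq_abs]
  calc |hexCut n w - hexCut n v| ^ 2 ≤ (2 / ((hexN v + 1) * hexH n)) ^ 2 := by gcongr
    _ = _ := by rw [div_pow, mul_pow]; norm_num

lemma hexBall_sum (n : ℕ) (G : ℕ → ℝ) (hG : ∀ k, 0 ≤ G k) (S : Finset (ℤ × ℤ))
    (hS : ∀ v ∈ S, hexN v ≤ n) :
    ∑ v ∈ S, G (hexN v) ≤ ∑ k ∈ Finset.range (n + 1), 8 * (k + 1) * G k := by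
  rw [← Finset.sum_fiberwise_of_maps_to (g := hexN) (t := Finset.range (n + 1))
    (fun v hv => Finset.mem_range.2 (Nat.lt_succ_of_le (hS v hv)))]
  apply Finset.sum_le_sum
  intro k _
  have e : ∑ v ∈ S with hexN v = k, G (hexN v) = ∑ v ∈ S with hexN v = k, G k :=
    Finset.sum_congr rfl (fun v hv => by rw [(Finset.mem_filter.1 hv).2])
  rw [e, Finset.sum_const, nsmul_eq_mul]
  have hc : (S.filter (fun v => hexN v = k)).card ≤ 8 * (k + 1) := by
    have hsub : S.filter (fun v => hexN v = k) ⊆ Finset.box k := by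
      intro v hv
      rw [Int.mem_box]
      exact (Finset.mem_filter.1 hv).2
    refine (Finset.card_le_card hsub).trans ?_
    rcases Nat.eq_zero_or_pos k with rfl | hk
    · simp
    · rw [Int.card_box hk.ne']; omega
  have hc' : ((S.filter (fun v => hexN v = k)).card : ℝ) ≤ 8 * (k + 1) := by exact_mod_cast hc
  exact mul_le_mul_of_nonneg_right hc' (hG k)

lemma hexN_finite (n : ℕ) : {v : ℤ × ℤ | hexN v ≤ n}.Finite := by
  apply (Set.finite_Icc ((-n, -n) : ℤ × ℤ) (n, n)).subset
  intro v hv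
  simp only [hexN, Set.mem_ofPred_eq, max_le_iff] at hv
  simp only [Set.mem_Icc, Prod.le_def]
  omega

lemma hexCut_energy {n : ℕ} (hn : 1 ≤ hexH n) (x : ℤ × ℤ)
    (hx : ∀ v, hexN (v + x) ≤ hexN v + 1 ∧ hexN v ≤ hexN (v + x) + 1) :
    ∑' v, (hexCut n (v + x) - hexCut n v) ^ 2 ≤ 64 / hexH n := by
  have hp : 0 < hexH n := by linarith
  set S := (hexN_finite n).toFinset
  have hS : ∀ v, v ∈ S ↔ hexN v ≤ n := by intro v; simp [S]
  rw [tsum_eq_sum (s := S)]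
  · calc ∑ v ∈ S, (hexCut n (v + x) - hexCut n v) ^ 2
        ≤ ∑ v ∈ S, (fun k : ℕ => 4 / (((k : ℝ) + 1) ^ 2 * hexH n ^ 2)) (hexN v) :=
          Finset.sum_le_sum (fun v _ => hexCut_diff hp (hx v).1 (hx v).2)
      _ ≤ ∑ k ∈ Finset.range (n + 1), 8 * ((k : ℝ) + 1) *
            (fun k : ℕ => 4 / (((k : ℝ) + 1) ^ 2 * hexH n ^ 2)) k :=
          hexBall_sum n (fun k : ℕ => 4 / (((k : ℝ) + 1) ^ 2 * hexH n ^ 2)) (fun k => by positivity) S (fun v hv => (hS v).1 hv)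
      _ = 32 / hexH n ^ 2 * hexH (n + 1) := by
          rw [show hexH (n + 1) = ∑ i ∈ Finset.range (n + 1), (1 / (i + 1) : ℝ) from rfl,
            Finset.mul_sum]
          apply Finset.sum_congr rfl
          intro k _
          field_simp
          norm_num
      _ ≤ 32 / hexH n ^ 2 * (2 * hexH n) := by
          gcongr
          rw [hexH_succ]
          have : (1 : ℝ) / (n + 1) ≤ 1 := by
            rw [div_le_one (by positivity)]; linarith [(Nat.cast_nonneg n : (0 : ℝ) ≤ n)]
          linarith
      _ = 64 / hexH n := by field_simp; norm_num
  · intro v hv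
    rw [hS, not_le] at hv
    rw [hexCut_zero hp hv.le, hexCut_zero hp (by have := (hx v).2; omega)]
    simp

lemma hexH_tendsto : Filter.Tendsto hexH Filter.atTop Filter.atTop :=
  Real.tendsto_sum_range_one_div_nat_succ_atTop

/-- Existence of cutoffs with small energy. -/
lemma exists_cut (ε : ℝ) (hε : 0 < ε) (m : ℕ) : ∃ φ : ℤ × ℤ → ℝ,
    (∃ S : Finset (ℤ × ℤ), ∀ v ∉ S, φ v = 0) ∧ (∀ v, hexN v ≤ m → 1 / 2 ≤ φ v) ∧
    ∀ x : ℤ × ℤ, (∀ v, hexN (v + x) ≤ hexN v + 1 ∧ hexN v ≤ hexN (v + x) + 1) →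
      ∑' v, (φ (v + x) - φ v) ^ 2 ≤ ε := by
  obtain ⟨n, hn⟩ := (hexH_tendsto.eventually_ge_atTop
    (max 1 (max (64 / ε) (2 * hexH m)))).exists
  simp only [max_le_iff] at hn
  obtain ⟨h1, h2, h3⟩ := hn
  have hp : 0 < hexH n := by linarith
  refine ⟨hexCut n, ⟨(hexN_finite n).toFinset, ?_⟩, ?_, ?_⟩
  · intro v hv
    simp only [Set.Finite.mem_toFinset, Set.mem_ofPred_eq, not_le] at hv
    exact hexCut_zero hp hv.le
  · intro v hv
    refine le_trans ?_ (le_max_right _ _)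
    have : hexH (hexN v) / hexH n ≤ 1 / 2 := by
      rw [div_le_iff₀ hp]
      linarith [hexH_mono hv]
    linarith
  · intro x hx
    refine (hexCut_energy h1 x hx).trans ?_
    rw [div_le_iff₀ hp]
    rw [div_le_iff₀ hε] at h2
    linarith

lemma cut_summable {φ : ℤ × ℤ → ℝ} (hφ : ∃ S : Finset (ℤ × ℤ), ∀ v ∉ S, φ v = 0)
    (x y : ℤ × ℤ) (f : ℤ × ℤ → ℝ)
    (hf : ∀ v, φ v = 0 → φ (v + x) = 0 → φ (v + y) = 0 → f v = 0) : Summable f := by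
  obtain ⟨S, hS⟩ := hφ
  apply summable_of_ne_finset_zero
    (s := S ∪ S.image (fun v => v - x) ∪ S.image (fun v => v - y))
  intro v hv
  simp only [Finset.mem_union, Finset.mem_image, not_or, not_exists, not_and] at hv
  obtain ⟨⟨h1, h2⟩, h3⟩ := hv
  exact hf v (hS v h1) (hS _ fun h => h2 (v + x) h (by simp))
    (hS _ fun h => h3 (v + y) h (by simp))

lemma tsum_shift (ψ f : ℤ × ℤ → ℝ) (x : ℤ × ℤ) :
    ∑' v, ψ v * f (v - x) = ∑' v, ψ (v + x) * f v := by
  rw [← (Equiv.addRight x).tsum_eq]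
  simp

lemma tri_sum {φ ψ : ℤ × ℤ → ℝ} (hφ : ∃ S : Finset (ℤ × ℤ), ∀ v ∉ S, φ v = 0)
    (hψ : ∀ v, φ v = 0 → ψ v = 0) (x y : ℤ × ℤ) (A B C : ℤ × ℤ → ℝ) :
    ∑' v, ψ v * (A v + B (v - x) + C (v - y)) =
      ∑' v, (ψ v * A v + ψ (v + x) * B v + ψ (v + y) * C v) := by
  have s1 : Summable fun v => ψ v * A v :=
    cut_summable hφ x y _ fun v h _ _ => by rw [hψ v h, zero_mul]
  have s2 : Summable fun v => ψ v * B (v - x) :=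
    cut_summable hφ x y _ fun v h _ _ => by rw [hψ v h, zero_mul]
  have s3 : Summable fun v => ψ v * C (v - y) :=
    cut_summable hφ x y _ fun v h _ _ => by rw [hψ v h, zero_mul]
  have s2' : Summable fun v => ψ (v + x) * B v :=
    cut_summable hφ x y _ fun v _ h _ => by rw [hψ _ h, zero_mul]
  have s3' : Summable fun v => ψ (v + y) * C v :=
    cut_summable hφ x y _ fun v _ _ h => by rw [hψ _ h, zero_mul]
  rw [(s1.add s2').tsum_add s3', s1.tsum_add s2', ← tsum_shift, ← tsum_shift,
    ← s1.tsum_add s2, ← (s1.add s2).tsum_add s3]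
  exact tsum_congr fun v => by ring

/-- Excess angle at the first vertex. -/
noncomputable def hexTA (R : ℤ × ℤ → ℝ) (x y v : ℤ × ℤ) : ℝ :=
  hexAng (R v) (R (v + x)) (R (v + y)) - π / 3

/-- Excess angle at the second vertex. -/
noncomputable def hexTB (R : ℤ × ℤ → ℝ) (x y v : ℤ × ℤ) : ℝ :=
  hexAng (R (v + x)) (R v) (R (v + y)) - π / 3

/-- Excess angle at the third vertex. -/
noncomputable def hexTC (R : ℤ × ℤ → ℝ) (x y v : ℤ × ℤ) : ℝ :=
  hexAng (R (v + y)) (R v) (R (v + x)) - π / 3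

/-- Dissipation on one triangle. -/
noncomputable def hexQ (R φ : ℤ × ℤ → ℝ) (x y v : ℤ × ℤ) : ℝ :=
  hexIn (R v) (R (v + x)) (R (v + y)) / 4 *
    (φ v ^ 2 * hexTA R x y v ^ 2 + φ (v + x) ^ 2 * hexTB R x y v ^ 2
      + φ (v + y) ^ 2 * hexTC R x y v ^ 2)

lemma hexQ_nonneg (R φ : ℤ × ℤ → ℝ) (x y v : ℤ × ℤ) : 0 ≤ hexQ R φ x y v := by
  have : 0 ≤ hexIn (R v) (R (v + x)) (R (v + y)) := Real.sqrt_nonneg _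
  unfold hexQ; positivity

lemma tri_total {R φ : ℤ × ℤ → ℝ} {M ε : ℝ} (hR : ∀ v, 0 < R v) (hM : ∀ v, R v ≤ M)
    (hφ : ∃ S : Finset (ℤ × ℤ), ∀ v ∉ S, φ v = 0) (x y : ℤ × ℤ)
    (hx : ∑' v, (φ (v + x) - φ v) ^ 2 ≤ ε) (hy : ∑' v, (φ (v + y) - φ v) ^ 2 ≤ ε)
    (v₀ : ℤ × ℤ) :
    ∑' v, (φ v ^ 2 * R v) * (hexTA R x y v + hexTB R x y (v - x) + hexTC R x y (v - y)) ≤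
      40 * M * ε - hexQ R φ x y v₀ := by
  rw [tri_sum (ψ := fun v => φ v ^ 2 * R v) hφ (fun v h => by simp [h])]
  have hMpos : 0 < M := (hR 0).trans_le (hM 0)
  have sx : Summable fun v => (φ (v + x) - φ v) ^ 2 :=
    cut_summable hφ x y _ fun v h1 h2 _ => by simp [h1, h2]
  have sy : Summable fun v => (φ (v + y) - φ v) ^ 2 :=
    cut_summable hφ x y _ fun v h1 _ h2 => by simp [h1, h2]
  have sQ : Summable (hexQ R φ x y) :=
    cut_summable hφ x y _ fun v h1 h2 h3 => by simp [hexQ, h1, h2, h3]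
  have sE := (sx.add sy).mul_left (20 * M)
  have sF : Summable fun v => (φ v ^ 2 * R v * hexTA R x y v
      + φ (v + x) ^ 2 * R (v + x) * hexTB R x y v
      + φ (v + y) ^ 2 * R (v + y) * hexTC R x y v) :=
    cut_summable hφ x y _ fun v h1 h2 h3 => by simp [h1, h2, h3]
  have h1 := sF.tsum_le_tsum (g := fun v => 20 * M * ((φ (v + x) - φ v) ^ 2
      + (φ (v + y) - φ v) ^ 2) - hexQ R φ x y v)
    (fun v => tri_ineq (φ v) (φ (v + x)) (φ (v + y)) (hR v) (hR _) (hR _) (hM _) (hM _))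
    (sE.sub sQ)
  rw [sE.tsum_sub sQ, tsum_mul_left, sx.tsum_add sy] at h1
  have h2 : hexQ R φ x y v₀ ≤ ∑' v, hexQ R φ x y v :=
    sQ.le_tsum v₀ (fun v _ => hexQ_nonneg R φ x y v)
  have h3 := mul_le_mul_of_nonneg_left (add_le_add hx hy) (by positivity : 0 ≤ 20 * M)
  refine h1.trans ?_
  linarith

lemma grid_rigid {R : ℤ × ℤ → ℝ} {M : ℝ} (hR : ∀ v, 0 < R v) (hM : ∀ v, R v ≤ M)
    (hΘ : ∀ v, 0 ≤ (hexTA R (1, 0) (0, 1) v + hexTB R (1, 0) (0, 1) (v - (1, 0))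
        + hexTC R (1, 0) (0, 1) (v - (0, 1)))
      + (hexTA R (0, 1) (-1, 1) v + hexTB R (0, 1) (-1, 1) (v - (0, 1))
        + hexTC R (0, 1) (-1, 1) (v - (-1, 1)))) (v : ℤ × ℤ) :
    R (v + (1, 0)) = R v ∧ R (v + (0, 1)) = R v := by
  have hMpos : 0 < M := (hR 0).trans_le (hM 0)
  have hr := hexIn_pos (hR v) (hR (v + (1, 0))) (hR (v + (0, 1)))
  set r := hexIn (R v) (R (v + (1, 0))) (R (v + (0, 1))) with hrdef
  have key : ∀ ε > 0, r / 16 * (hexTA R (1, 0) (0, 1) v ^ 2 + hexTB R (1, 0) (0, 1) v ^ 2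
      + hexTC R (1, 0) (0, 1) v ^ 2) ≤ 80 * M * ε := by
    intro ε hε
    obtain ⟨φ, hφ, hone, hen⟩ := exists_cut ε hε (hexN v + 1)
    have n0 := hen (1, 0) (fun v => by simp only [hexN, Prod.fst_add, Prod.snd_add]; omega)
    have n1 := hen (0, 1) (fun v => by simp only [hexN, Prod.fst_add, Prod.snd_add]; omega)
    have n2 := hen (-1, 1) (fun v => by simp only [hexN, Prod.fst_add, Prod.snd_add]; omega)
    have t1 := tri_total hR hM hφ _ _ n0 n1 v
    have t2 := tri_total hR hM hφ _ _ n1 n2 v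
    have q2 := hexQ_nonneg R φ (0, 1) (-1, 1) v
    have hpos : 0 ≤ ∑' v, (φ v ^ 2 * R v) * ((hexTA R (1, 0) (0, 1) v
        + hexTB R (1, 0) (0, 1) (v - (1, 0)) + hexTC R (1, 0) (0, 1) (v - (0, 1)))
      + (hexTA R (0, 1) (-1, 1) v + hexTB R (0, 1) (-1, 1) (v - (0, 1))
        + hexTC R (0, 1) (-1, 1) (v - (-1, 1)))) :=
      tsum_nonneg fun v => mul_nonneg (mul_nonneg (sq_nonneg _) (hR v).le) (hΘ v)
    simp only [mul_add (φ _ ^ 2 * R _) (_ + _ + _) (_ + _ + _)] at hpos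
    rw [Summable.tsum_add] at hpos
    rotate_left
    · exact cut_summable hφ 0 0 _ fun v h _ _ => by simp [h]
    · exact cut_summable hφ 0 0 _ fun v h _ _ => by simp [h]
    have hQ : hexQ R φ (1, 0) (0, 1) v ≤ 80 * M * ε := by linarith
    refine le_trans ?_ hQ
    have b : ∀ w, hexN w ≤ hexN v + 1 → 1 / 4 ≤ φ w ^ 2 := by
      intro w hw
      have := hone w hw
      nlinarith
    have b0 := b v (by omega)
    have b1 := b (v + (1, 0)) (by simp only [hexN, Prod.fst_add, Prod.snd_add]; omega)
    have b2 := b (v + (0, 1)) (by simp only [hexN, Prod.fst_add, Prod.snd_add]; omega)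
    unfold hexQ
    rw [← hrdef]
    have c0 := mul_le_mul_of_nonneg_right b0 (sq_nonneg (hexTA R (1, 0) (0, 1) v))
    have c1 := mul_le_mul_of_nonneg_right b1 (sq_nonneg (hexTB R (1, 0) (0, 1) v))
    have c2 := mul_le_mul_of_nonneg_right b2 (sq_nonneg (hexTC R (1, 0) (0, 1) v))
    have := mul_le_mul_of_nonneg_left (add_le_add (add_le_add c0 c1) c2)
      (by positivity : 0 ≤ r / 4)
    linarith
  have hz : r / 16 * (hexTA R (1, 0) (0, 1) v ^ 2 + hexTB R (1, 0) (0, 1) v ^ 2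
      + hexTC R (1, 0) (0, 1) v ^ 2) ≤ 0 := by
    apply le_of_forall_pos_le_add
    intro δ hδ
    have := key (δ / (80 * M)) (by positivity)
    rw [mul_div_cancel₀ _ (by positivity)] at this
    linarith
  have hz' : hexTA R (1, 0) (0, 1) v ^ 2 + hexTB R (1, 0) (0, 1) v ^ 2
      + hexTC R (1, 0) (0, 1) v ^ 2 ≤ 0 := by
    by_contra h
    push Not at h
    have : 0 < r / 16 * (hexTA R (1, 0) (0, 1) v ^ 2 + hexTB R (1, 0) (0, 1) v ^ 2
      + hexTC R (1, 0) (0, 1) v ^ 2) := by positivity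
    linarith
  have zA : hexTA R (1, 0) (0, 1) v = 0 := by
    apply pow_eq_zero_iff (two_ne_zero) |>.1; nlinarith [sq_nonneg (hexTA R (1, 0) (0, 1) v),
      sq_nonneg (hexTB R (1, 0) (0, 1) v), sq_nonneg (hexTC R (1, 0) (0, 1) v)]
  have zB : hexTB R (1, 0) (0, 1) v = 0 := by
    apply pow_eq_zero_iff (two_ne_zero) |>.1; nlinarith [sq_nonneg (hexTA R (1, 0) (0, 1) v),
      sq_nonneg (hexTB R (1, 0) (0, 1) v), sq_nonneg (hexTC R (1, 0) (0, 1) v)]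
  have zC : hexTC R (1, 0) (0, 1) v = 0 := by
    apply pow_eq_zero_iff (two_ne_zero) |>.1; nlinarith [sq_nonneg (hexTA R (1, 0) (0, 1) v),
      sq_nonneg (hexTB R (1, 0) (0, 1) v), sq_nonneg (hexTC R (1, 0) (0, 1) v)]
  have eA := hexAng_rigid (hR _) (hR _) (hR _) zA
  have eB := hexAng_rigid (hR _) (hR _) (hR _) zB
  have eC := hexAng_rigid (hR _) (hR _) (hR _) zC
  rw [hexIn_rot, ← eA] at eB
  rw [hexIn_rot', ← eA] at eC
  exact ⟨eB, eC⟩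

lemma grid_const {R : ℤ × ℤ → ℝ} (h : ∀ v, R (v + (1, 0)) = R v ∧ R (v + (0, 1)) = R v)
    (a b : ℤ) : R (a, b) = R (0, 0) := by
  have h1 : ∀ a b : ℤ, R (a + 1, b) = R (a, b) := fun a b => by simpa using (h (a, b)).1
  have h2 : ∀ a b : ℤ, R (a, b + 1) = R (a, b) := fun a b => by simpa using (h (a, b)).2
  have e1 : ∀ a b : ℤ, R (a, b) = R (0, b) := by
    intro a b
    induction a using Int.induction_on with
    | zero => rfl
    | succ i ih => rw [h1, ih]
    | pred i ih => rw [← ih, ← h1, sub_add_cancel]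
  have e2 : ∀ b : ℤ, R (0, b) = R (0, 0) := by
    intro b
    induction b using Int.induction_on with
    | zero => rfl
    | succ i ih => rw [h2, ih]
    | pred i ih => rw [← ih, ← h2, sub_add_cancel]
  rw [e1, e2]

/-- Discrete Liouville theorem for the hexagonal complex: a positive label on
the triangular lattice whose angle sum is at least `2π` at every vertex and
which is bounded above must be constant. -/
theorem hex_liouville
    (ρ : ℂ → ℝ)
    (hρ : ∀ v ∈ hexLattice, 0 < ρ v)
    (hΘ : ∀ v ∈ hexLattice, 2 * Real.pi ≤ hexAngleSum ρ v)
    (hbdd : ∃ M : ℝ, ∀ v ∈ hexLattice, ρ v ≤ M) :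
    ∃ c : ℝ, ∀ v ∈ hexLattice, ρ v = c := by
  obtain ⟨M, hM⟩ := hbdd
  set R : ℤ × ℤ → ℝ := fun v => ρ ((v.1 : ℂ) + (v.2 : ℂ) * hexω) with hRdef
  have mem : ∀ v : ℤ × ℤ, (v.1 : ℂ) + (v.2 : ℂ) * hexω ∈ hexLattice := fun v => ⟨v.1, v.2, rfl⟩
  have hR : ∀ v, 0 < R v := fun v => hρ _ (mem v)
  have hRM : ∀ v, R v ≤ M := fun v => hM _ (mem v)
  have w2 := hexω_sq
  have w3 : hexω ^ 3 = -1 := by linear_combination (hexω + 1) * w2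
  have w4 : hexω ^ 4 = -hexω := by linear_combination hexω * w3
  have w5 : hexω ^ 5 = 1 - hexω := by linear_combination hexω ^ 2 * w3 - w2
  have w6 : hexω ^ 6 = 1 := by linear_combination (hexω ^ 3 - 1) * w3
  have hc := grid_const (grid_rigid hR hRM (fun v => by
    have h := hΘ _ (mem v)
    have key : ∀ (z : ℂ) (x : ℤ × ℤ), z = (x.1 : ℂ) + (x.2 : ℂ) * hexω →
        ρ ((v.1 : ℂ) + (v.2 : ℂ) * hexω + z) = R (v + x) := by
      intro z x hz
      simp only [hRdef, hz, Prod.fst_add, Prod.snd_add]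
      congr 1
      push_cast; ring
    have k0 := key (hexω ^ 0) (1, 0) (by simp)
    have k1 := key (hexω ^ 1) (0, 1) (by simp)
    have k2 := key (hexω ^ 2) (-1, 1) (by rw [w2]; push_cast; ring)
    have k3 := key (hexω ^ 3) (-1, 0) (by rw [w3]; push_cast; ring)
    have k4 := key (hexω ^ 4) (0, -1) (by rw [w4]; push_cast; ring)
    have k5 := key (hexω ^ 5) (1, -1) (by rw [w5]; push_cast; ring)
    have k6 := key (hexω ^ 6) (1, 0) (by rw [w6]; push_cast; ring)
    have kv : ρ ((v.1 : ℂ) + (v.2 : ℂ) * hexω) = R v := rfl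
    simp only [hexAngleSum, Finset.sum_range_succ, Finset.sum_range_zero, zero_add,
      Nat.reduceAdd, k0, k1, k2, k3, k4, k5, k6, kv] at h
    change 2 * π ≤ hexAng (R v) (R (v + (1, 0))) (R (v + (0, 1)))
      + hexAng (R v) (R (v + (0, 1))) (R (v + (-1, 1)))
      + hexAng (R v) (R (v + (-1, 1))) (R (v + (-1, 0)))
      + hexAng (R v) (R (v + (-1, 0))) (R (v + (0, -1)))
      + hexAng (R v) (R (v + (0, -1))) (R (v + (1, -1)))
      + hexAng (R v) (R (v + (1, -1))) (R (v + (1, 0))) at h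
    rw [hexAng_symm _ (R (v + (-1, 1))) (R (v + (-1, 0))),
      hexAng_symm _ (R (v + (-1, 0))) (R (v + (0, -1)))] at h
    have a1 : v - (1, 0) + (0, 1) = v + (-1, 1) := by ext <;> simp <;> ring
    have a2 : v - (0, 1) + (1, 0) = v + (1, -1) := by ext <;> simp <;> ring
    have a3 : v - (0, 1) + (-1, 1) = v + (-1, 0) := by ext <;> simp <;> ring
    have a4 : v - (-1, 1) + (0, 1) = v + (1, 0) := by ext <;> simp <;> ring
    have a5 : v - (1, 0) = v + (-1, 0) := by ext <;> simp <;> ring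
    have a6 : v - (0, 1) = v + (0, -1) := by ext <;> simp <;> ring
    have a7 : v - (-1, 1) = v + (1, -1) := by ext <;> simp <;> ring
    simp only [hexTA, hexTB, hexTC, sub_add_cancel, a1, a2, a3, a4]
    rw [a5, a6, a7]
    linarith [hexAng_symm (R v) (R (v + (-1, 0))) (R (v + (0, -1)))]))
  refine ⟨R (0, 0), ?_⟩
  rintro v ⟨a, b, rfl⟩
  exact hc a b
end

section
/- Let m ≥ 3 and let ρ_1, ρ_2 : {0,1,…,m} → (0,∞) be two labels of a star, with 0 the center and 1,…,m the boundary vertices in cyclic order (indices among 1,…,m taken mod m). For j = 1,2 let Θ_j = Σ_{i=1}^{m} arccos( 1 − 2ρ_j(i)ρ_j(i+1) / ((ρ_j(0)+ρ_j(i))(ρ_j(0)+ρ_j(i+1))) ) be the angle sum at the center. If Θ_2 ≥ Θ_1 and ρ_2(i)/ρ_1(i) ≤ ρ_2(0)/ρ_1(0) for every i ∈ {1,…,m}, then ρ_2(i)/ρ_1(i) = ρ_2(0)/ρ_1(0) for every i ∈ {1,…,m}. -/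
open Real Finset

theorem star_arg_eq (a b c : ℝ) :
    1 - 2 * b * c / ((a + b) * (a + c)) = 1 - 2 * ((b / (a + b)) * (c / (a + c))) := by
  rw [div_mul_div_comm, mul_assoc, mul_div_assoc]

/-- Local step of the Maximum Principle (Fact 2.1) for a star with center `0`
and boundary vertices `1, …, m` in cyclic order (the cyclic successor of `i`
among `1, …, m` is `if i = m then 1 else i + 1`): if the angle sum of `ρ₂` at
the center is at least that of `ρ₁`, and the ratio `ρ₂/ρ₁` attains its
maximum over the star at the center, then the ratio is constant on the star. -/
theorem star_maximum_principle
    (m : ℕ) (hm : 3 ≤ m)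
    (ρ₁ ρ₂ : ℕ → ℝ)
    (hρ₁ : ∀ i ≤ m, 0 < ρ₁ i)
    (hρ₂ : ∀ i ≤ m, 0 < ρ₂ i)
    (Θ₁ Θ₂ : ℝ)
    (hΘ₁ : Θ₁ = ∑ i ∈ Finset.Icc 1 m,
      Real.arccos (1 - 2 * ρ₁ i * ρ₁ (if i = m then 1 else i + 1) /
        ((ρ₁ 0 + ρ₁ i) * (ρ₁ 0 + ρ₁ (if i = m then 1 else i + 1)))))
    (hΘ₂ : Θ₂ = ∑ i ∈ Finset.Icc 1 m,
      Real.arccos (1 - 2 * ρ₂ i * ρ₂ (if i = m then 1 else i + 1) /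
        ((ρ₂ 0 + ρ₂ i) * (ρ₂ 0 + ρ₂ (if i = m then 1 else i + 1)))))
    (hΘ : Θ₁ ≤ Θ₂)
    (hmax : ∀ i ∈ Finset.Icc 1 m, ρ₂ i / ρ₁ i ≤ ρ₂ 0 / ρ₁ 0) :
    ∀ i ∈ Finset.Icc 1 m, ρ₂ i / ρ₁ i = ρ₂ 0 / ρ₁ 0 := by
  have h10 := hρ₁ 0 (Nat.zero_le _)
  have h20 := hρ₂ 0 (Nat.zero_le _)
  simp only [star_arg_eq] at hΘ₁ hΘ₂
  have hsucc : ∀ i ∈ Finset.Icc 1 m, (if i = m then 1 else i + 1) ∈ Finset.Icc 1 m := by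
    intro i hi
    rw [Finset.mem_Icc] at hi ⊢
    split_ifs <;> omega
  have pos : ∀ ρ : ℕ → ℝ, (∀ i ≤ m, 0 < ρ i) → ∀ i ∈ Finset.Icc 1 m,
      0 < ρ i / (ρ 0 + ρ i) ∧ ρ i / (ρ 0 + ρ i) < 1 := by
    intro ρ h i hi
    have h0 := h 0 (Nat.zero_le _)
    have h1 := h i (Finset.mem_Icc.1 hi).2
    refine ⟨by positivity, ?_⟩
    rw [div_lt_one (by positivity)]
    linarith
  have hle : ∀ i ∈ Finset.Icc 1 m, ρ₂ i / (ρ₂ 0 + ρ₂ i) ≤ ρ₁ i / (ρ₁ 0 + ρ₁ i) := by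
    intro i hi
    have h1 := hρ₁ i (Finset.mem_Icc.1 hi).2
    have h2 := hρ₂ i (Finset.mem_Icc.1 hi).2
    have h := hmax i hi
    rw [div_le_div_iff₀ h1 h10] at h
    rw [div_le_div_iff₀ (by positivity) (by positivity)]
    linarith
  have hterm : ∀ i ∈ Finset.Icc 1 m,
      Real.arccos (1 - 2 * ((ρ₂ i / (ρ₂ 0 + ρ₂ i)) * (ρ₂ (if i = m then 1 else i + 1) /
        (ρ₂ 0 + ρ₂ (if i = m then 1 else i + 1))))) ≤
      Real.arccos (1 - 2 * ((ρ₁ i / (ρ₁ 0 + ρ₁ i)) * (ρ₁ (if i = m then 1 else i + 1) /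
        (ρ₁ 0 + ρ₁ (if i = m then 1 else i + 1))))) := by
    intro i hi
    apply Real.antitone_arccos
    have := mul_le_mul (hle i hi) (hle _ (hsucc i hi)) (pos ρ₂ hρ₂ _ (hsucc i hi)).1.le
      (pos ρ₁ hρ₁ i hi).1.le
    linarith
  have heq := (Finset.sum_eq_sum_iff_of_le hterm).1
    (le_antisymm (Finset.sum_le_sum hterm) (by rw [← hΘ₁, ← hΘ₂]; exact hΘ))
  intro i hi
  have h1 := hρ₁ i (Finset.mem_Icc.1 hi).2
  have h2 := hρ₂ i (Finset.mem_Icc.1 hi).2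
  have e := heq i hi
  have l1 := hle i hi
  have l2 := hle _ (hsucc i hi)
  obtain ⟨p1, q1⟩ := pos ρ₁ hρ₁ i hi
  obtain ⟨p2, q2⟩ := pos ρ₂ hρ₂ i hi
  obtain ⟨p3, q3⟩ := pos ρ₁ hρ₁ _ (hsucc i hi)
  obtain ⟨p4, q4⟩ := pos ρ₂ hρ₂ _ (hsucc i hi)
  have u1 := mul_lt_one_of_nonneg_of_lt_one_left p1.le q1 q3.le
  have u2 := mul_lt_one_of_nonneg_of_lt_one_left p2.le q2 q4.le
  have v1 := mul_pos p1 p3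
  have v2 := mul_pos p2 p4
  have e' := Real.arccos_injOn ⟨by linarith, by linarith⟩ ⟨by linarith, by linarith⟩ e
  have es : ρ₁ i / (ρ₁ 0 + ρ₁ i) ≤ ρ₂ i / (ρ₂ 0 + ρ₂ i) := by
    by_contra hlt
    have := mul_lt_mul (not_le.1 hlt) l2 p4 p1.le
    linarith
  apply le_antisymm (hmax i hi)
  rw [div_le_div_iff₀ (by positivity) (by positivity)] at es ⊢
  linarith
end
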